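/- arXiv:1712.09451 — 2 statements merged into one kernel-verified Lean document; each statement's English description precedes it below -/
import Mathlib

section
/- Let X ⊆ ℝ² be a Borel set with Hausdorff dimension strictly greater than 1. Then for Lebesgue-almost every λ ∈ ℝ, the projection π_λ(X) has positive Lebesgue measure, where π_λ : ℝ² → ℝ is given by π_λ(x, y) = x - λy. -/
open MeasureTheory Set

open Filter
open scoped ENNReal NNReal Topology

/-!
By duality the projection of `X` with parameter `l` is the vertical section at `l` of the union of
the lines `{(l, p.1 - l * p.2) | l : ℝ}`, `p ∈ X`. If the theorem fails, then over some bounded set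
`E` of parameters of positive measure this union is null, hence contained in open sets `O` of
arbitrarily small measure. A greedy form of Frostman's lemma spreads mass over dyadic squares around
`X`, with at most `2 ^ (-s k)` in each square of side `2 ^ (-k)`; the filled squares cover `X`, so
the total mass bounds the Hausdorff content. Projecting this mass, Cauchy–Schwarz on `O` together
with the bound of the `L²` norm of the projections by the `1`-energy, which is finite for `1 < s`,
shows that the mass is at most a constant multiple of the measure of `O`. Letting `O` shrink gives
`μH[s] X = 0` for every `1 < s ≤ 2`, contradicting `1 < dimH X`.
-/

section AnalyticSets

lemma exists_setOf_forall_lt_le_subset (n : ℕ → ℕ) {W : Set (ℕ → ℕ)} (hW : IsOpen W)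
    (hn : Iic n ⊆ W) : ∃ k, {x : ℕ → ℕ | ∀ i < k, x i ≤ n i} ⊆ W := by
  let := PiNat.metricSpaceNatNat
  have hcompact : IsCompact (Iic n) := by
    rw [← Icc_bot]
    exact isCompact_Icc
  obtain ⟨δ, hδ, hsub⟩ := hcompact.exists_thickening_subset_open hW hn
  obtain ⟨k, hk⟩ := exists_pow_lt_of_lt_one hδ (by norm_num : (1 / 2 : ℝ) < 1)
  refine ⟨k, fun x hx => hsub (Metric.mem_thickening_iff.2
    ⟨fun i => min (x i) (n i), fun i => min_le_right _ _, lt_of_le_of_lt ?_ hk⟩)⟩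
  rw [← PiNat.mem_cylinder_iff_dist_le]
  exact fun i hi => (min_eq_left (hx i hi)).symm

lemma exists_forall_setOf_forall_lt_le {P : Set (ℕ → ℕ) → Prop} (h_univ : P univ)
    (h_step : ∀ B k, P B → ∃ m, P (B ∩ {x | x k ≤ m})) :
    ∃ n : ℕ → ℕ, ∀ k, P {x | ∀ i < k, x i ≤ n i} := by
  choose m hm using h_step
  let S : ℕ → {B // P B} := Nat.rec ⟨univ, h_univ⟩ fun k B => ⟨_, hm B.1 k B.2⟩
  let n : ℕ → ℕ := fun k => m (S k).1 k (S k).2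
  have hS : ∀ k, (S k).1 = {x | ∀ i < k, x i ≤ n i} := by
    intro k
    induction k with
    | zero => simp [S]
    | succ k ih =>
      change (S k).1 ∩ {x | x k ≤ n k} = _
      rw [ih]
      ext x
      simp only [mem_inter_iff, mem_ofPred_eq, Nat.forall_lt_succ_right]
  exact ⟨n, fun k => hS k ▸ (S k).2⟩

variable {α : Type*} [TopologicalSpace α] [MeasurableSpace α]

lemma exists_isCompact_subset_range_le_measure (μ : Measure α) [μ.OuterRegular]
    {f : (ℕ → ℕ) → α} (hf : Continuous f) {c : ℝ≥0∞} (hc : c < μ (range f)) :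
    ∃ K ⊆ range f, IsCompact K ∧ c ≤ μ K := by
  have h_step : ∀ (B : Set (ℕ → ℕ)) (k : ℕ), c < μ (f '' B) →
      ∃ m, c < μ (f '' (B ∩ {x | x k ≤ m})) := by
    intro B k hB
    have hmono : Monotone fun m => f '' (B ∩ {x | x k ≤ m}) := fun m m' hm =>
      image_mono (inter_subset_inter_right _ fun _ hx => le_trans hx hm)
    have hunion : B = ⋃ m, B ∩ {x | x k ≤ m} := by
      rw [← inter_iUnion, inter_eq_left.2 fun x _ => mem_iUnion.2 ⟨x k, le_refl (x k)⟩]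
    rw [hunion, image_iUnion, hmono.measure_iUnion] at hB
    exact lt_iSup_iff.1 hB
  obtain ⟨n, hn⟩ := exists_forall_setOf_forall_lt_le (P := fun B => c < μ (f '' B))
    (by rwa [image_univ]) h_step
  have hcompact : IsCompact (Iic n) := by
    rw [← Icc_bot]
    exact isCompact_Icc
  refine ⟨f '' Iic n, image_subset_range _ _, hcompact.image hf, ?_⟩
  rw [measure_eq_iInf_isOpen]
  refine le_iInf₂ fun V hV => le_iInf fun hV_open => ?_
  obtain ⟨k, hk⟩ := exists_setOf_forall_lt_le_subset n (hV_open.preimage hf) (image_subset_iff.1 hV)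
  exact (hn k).le.trans (measure_mono (image_subset_iff.2 hk))

lemma nullMeasurableSet_of_analyticSet_of_isFiniteMeasure [BorelSpace α] [T2Space α]
    (μ : Measure α) [μ.OuterRegular] [IsFiniteMeasure μ] {A : Set α} (hA : AnalyticSet A) :
    NullMeasurableSet A μ := by
  rw [AnalyticSet] at hA
  rcases hA with rfl | ⟨f, hf, rfl⟩
  · exact MeasurableSet.empty.nullMeasurableSet
  by_cases h_null : μ (range f) = 0
  · exact NullMeasurableSet.of_null h_null
  obtain ⟨u, -, hu, hu_lim⟩ := exists_seq_strictMono_tendsto' (pos_iff_ne_zero.2 h_null)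
  choose K hK_sub hK_compact hK_le using
    fun n => exists_isCompact_subset_range_le_measure μ hf (hu n).2
  have hK_meas : NullMeasurableSet (⋃ n, K n) μ :=
    (MeasurableSet.iUnion fun n => (hK_compact n).measurableSet).nullMeasurableSet
  have hμ_le : μ (range f) ≤ μ (⋃ n, K n) :=
    le_of_tendsto' hu_lim fun n => (hK_le n).trans (measure_mono (subset_iUnion K n))
  exact hK_meas.congr
    (ae_eq_of_subset_of_measure_ge (iUnion_subset hK_sub) hμ_le hK_meas (measure_ne_top _ _))

theorem nullMeasurableSet_of_analyticSet [BorelSpace α] [TopologicalSpace.MetrizableSpace α]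
    (μ : Measure α) [SFinite μ] {A : Set α} (hA : AnalyticSet A) : NullMeasurableSet A μ :=
  (nullMeasurableSet_of_analyticSet_of_isFiniteMeasure μ.toFinite hA).mono_ac
    (absolutelyContinuous_toFinite μ)

end AnalyticSets

section MeasureLemmas

variable {α : Type*} [MeasurableSpace α]

lemma ae_measure_section_pos {β : Type*} [MeasurableSpace β] (μ : Measure α) (ν : Measure β)
    [SFinite μ] [SFinite ν] {Z : Set (α × β)} (hZ : NullMeasurableSet Z (μ.prod ν))
    (h_null : ∀ E, MeasurableSet E → μ.prod ν (Z ∩ E ×ˢ univ) = 0 → μ E = 0) :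
    ∀ᵐ a ∂μ, 0 < ν (Prod.mk a ⁻¹' Z) := by
  obtain ⟨Z', hZZ', hZ'_meas, hZ'_ae⟩ := hZ.exists_measurable_superset_ae_eq
  let D : Set α := {a | ν (Prod.mk a ⁻¹' Z') = 0}
  have hD_meas : MeasurableSet D :=
    measurable_measure_prodMk_left hZ'_meas (measurableSet_singleton 0)
  have hZ'D : μ.prod ν (Z' ∩ D ×ˢ univ) = 0 := by
    rw [Measure.measure_prod_null (hZ'_meas.inter (hD_meas.prod .univ))]
    refine Eventually.of_forall fun a => ?_
    by_cases ha : a ∈ D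
    · exact measure_mono_null (fun b hb => hb.1) ha
    · exact measure_mono_null (fun b hb => ha hb.2.1) measure_empty
  have hD_null : μ D = 0 :=
    h_null D hD_meas (measure_mono_null (inter_subset_inter_left _ hZZ') hZ'D)
  have h_sections : ∀ᵐ a ∂μ, ∀ᵐ b ∂ν, Z' (a, b) = Z (a, b) := Measure.ae_ae_of_ae_prod hZ'_ae
  filter_upwards [measure_eq_zero_iff_ae_notMem.1 hD_null, h_sections] with a haD ha
  have h_eq : (Prod.mk a ⁻¹' Z' : Set β) =ᵐ[ν] Prod.mk a ⁻¹' Z := ha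
  rw [← measure_congr h_eq]
  exact pos_iff_ne_zero.2 haD

lemma lowerSemicontinuous_measure_section {β : Type*} [TopologicalSpace β]
    [FirstCountableTopology β] (μ : Measure α) {W : α → Set β} (hW : ∀ a, IsOpen (W a)) :
    LowerSemicontinuous fun b => μ {a | b ∈ W a} := by
  intro b c hc
  change c < μ {a | b ∈ W a} at hc
  change ∀ᶠ b' in 𝓝 b, c < μ {a | b' ∈ W a}
  obtain ⟨V, hV⟩ := (𝓝 b).exists_antitone_basis
  have hmono : Monotone fun n => {a | V n ⊆ W a} := fun m n hmn a ha => (hV.2 hmn).trans ha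
  have hunion : {a | b ∈ W a} = ⋃ n, {a | V n ⊆ W a} := by
    ext a
    simp only [mem_ofPred_eq, mem_iUnion, ← (hW a).mem_nhds_iff, hV.1.mem_iff, true_and]
  rw [hunion, hmono.measure_iUnion] at hc
  obtain ⟨n, hn⟩ := lt_iSup_iff.1 hc
  filter_upwards [hV.mem n] with b' hb'
  exact hn.trans_le (measure_mono fun a ha => ha hb')

lemma sq_setLIntegral_le (μ : Measure α) (s : Set α) {f : α → ℝ≥0∞}
    (hf : AEMeasurable f μ) : (∫⁻ a in s, f a ∂μ) ^ 2 ≤ μ s * ∫⁻ a, f a ^ 2 ∂μ := by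
  have h := ENNReal.lintegral_mul_le_Lp_mul_Lq (μ.restrict s) Real.HolderConjugate.two_two
    (aemeasurable_const (b := (1 : ℝ≥0∞))) hf.restrict
  simp only [Pi.mul_apply, one_mul, one_pow, lintegral_const, Measure.restrict_apply_univ,
    ENNReal.rpow_two] at h
  calc (∫⁻ a in s, f a ∂μ) ^ 2
      ≤ (μ s ^ (1 / 2 : ℝ) * (∫⁻ a in s, f a ^ 2 ∂μ) ^ (1 / 2 : ℝ)) ^ 2 := by gcongr
    _ = μ s * ∫⁻ a in s, f a ^ 2 ∂μ := by
        rw [mul_pow, ← ENNReal.rpow_mul_natCast, ← ENNReal.rpow_mul_natCast]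
        norm_num
    _ ≤ μ s * ∫⁻ a, f a ^ 2 ∂μ := by gcongr; exact Measure.restrict_le_self

lemma hausdorffMeasure_eq_zero_of_forall_exists_cover {α ι : Type*} [EMetricSpace α]
    [MeasurableSpace α] [BorelSpace α] [Countable ι] {s : ℝ} (hs : 0 < s) {A : Set α}
    (D : ι → Set α)
    (h : ∀ ε ≠ 0, ∃ T : Set ι, A ⊆ ⋃ i ∈ T, D i ∧ ∑' i : T, Metric.ediam (D i) ^ s ≤ ε) :
    μH[s] A = 0 := by
  choose T hT_cover hT_sum using fun n : ℕ => h (n : ℝ≥0∞)⁻¹ (by simp)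
  have hdiam : ∀ n (i : T n), Metric.ediam (D i) ≤ (n : ℝ≥0∞)⁻¹ ^ s⁻¹ := fun n i =>
    (ENNReal.le_rpow_inv_iff hs).2 ((ENNReal.le_tsum i).trans (hT_sum n))
  have hdiam_lim : Tendsto (fun n : ℕ => (n : ℝ≥0∞)⁻¹ ^ s⁻¹) atTop (𝓝 0) := by
    have := (ENNReal.continuous_rpow_const (y := s⁻¹)).tendsto 0
    rw [ENNReal.zero_rpow_of_pos (inv_pos.2 hs)] at this
    exact this.comp ENNReal.tendsto_inv_nat_nhds_zero
  have hle := Measure.hausdorffMeasure_le_liminf_tsum s A _ hdiam_lim (fun n (i : T n) => D i)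
    (Eventually.of_forall hdiam)
    (Eventually.of_forall fun n => (hT_cover n).trans_eq (biUnion_eq_iUnion _ _))
  refine le_antisymm (hle.trans_eq ?_) zero_le
  exact (tendsto_of_tendsto_of_tendsto_of_le_of_le tendsto_const_nhds
    ENNReal.tendsto_inv_nat_nhds_zero (fun _ => zero_le) hT_sum).liminf_eq

lemma inv_le_one_add_tsum_two_pow (x : ℝ≥0∞) :
    x⁻¹ ≤ 1 + ∑' k : ℕ, 2 ^ (k + 1) * (Iic (2⁻¹ ^ k)).indicator 1 x := by
  by_cases h : ∃ k : ℕ, 2⁻¹ ^ k < x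
  · classical
    rcases hk : Nat.find h with _ | k
    · have hx : 1 < x := by simpa only [hk, pow_zero] using Nat.find_spec h
      exact (ENNReal.inv_le_one.2 hx.le).trans le_self_add
    · have hx : 2⁻¹ ^ (k + 1) < x := by rw [← hk]; exact Nat.find_spec h
      have hx' : x ∈ Iic (2⁻¹ ^ k) := not_lt.1 (Nat.find_min h (by rw [hk]; exact k.lt_succ_self))
      calc x⁻¹ ≤ 2 ^ (k + 1) := by
            rw [ENNReal.inv_le_iff_inv_le, ENNReal.inv_pow]
            exact hx.le
        _ = 2 ^ (k + 1) * (Iic (2⁻¹ ^ k)).indicator 1 x := by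
            rw [indicator_of_mem hx', Pi.one_apply, mul_one]
        _ ≤ ∑' k : ℕ, 2 ^ (k + 1) * (Iic (2⁻¹ ^ k)).indicator 1 x := ENNReal.le_tsum k
        _ ≤ _ := le_add_self
  · push Not at h
    have h_top : ∑' k : ℕ, 2 ^ (k + 1) * (Iic (2⁻¹ ^ k)).indicator 1 x = ∞ := by
      refine top_unique ((ENNReal.tsum_const_eq_top_of_ne_zero one_ne_zero).ge.trans
        (ENNReal.tsum_le_tsum fun k : ℕ => ?_))
      rw [indicator_of_mem (mem_Iic.2 (h k)), Pi.one_apply, mul_one]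
      exact one_le_pow₀ one_le_two
    simp only [h_top, add_top, le_top]

lemma lintegral_inv_edist_le_tsum_closedEBall {α : Type*} [PseudoEMetricSpace α] [MeasurableSpace α]
    [OpensMeasurableSpace α] (μ : Measure α) (x : α) {b : ℕ → ℝ≥0∞}
    (hb : ∀ k, μ (Metric.closedEBall x (2⁻¹ ^ k)) ≤ b k) :
    ∫⁻ y, (edist x y)⁻¹ ∂μ ≤ μ univ + ∑' k, 2 ^ (k + 1) * b k := by
  have hball : ∀ k : ℕ, MeasurableSet (Metric.closedEBall x (2⁻¹ ^ k)) := fun k =>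
    Metric.isClosed_closedEBall.measurableSet
  calc ∫⁻ y, (edist x y)⁻¹ ∂μ
      ≤ ∫⁻ y, 1 + ∑' k : ℕ, 2 ^ (k + 1) * (Metric.closedEBall x (2⁻¹ ^ k)).indicator 1 y ∂μ := by
        refine lintegral_mono fun y => (inv_le_one_add_tsum_two_pow _).trans_eq ?_
        simp only [indicator, mem_Iic, Metric.mem_closedEBall', Pi.one_apply]
    _ = μ univ + ∑' k : ℕ, 2 ^ (k + 1) * μ (Metric.closedEBall x (2⁻¹ ^ k)) := by
        rw [lintegral_add_left measurable_const, lintegral_one, lintegral_tsum fun k =>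
          ((measurable_one.indicator (hball k)).const_mul _).aemeasurable]
        simp_rw [lintegral_const_mul _ (measurable_one.indicator (hball _)),
          lintegral_indicator_one (hball _)]
    _ ≤ μ univ + ∑' k, 2 ^ (k + 1) * b k := by gcongr with k; exact hb k

end MeasureLemmas

section Frostman

lemma exists_greedy_filling {κ : Type*} (A : ℕ → Set κ) (hA_fin : ∀ i, (A i).Finite)
    (hA : ∀ i, (A i).Nonempty) (cap : κ → ℝ≥0∞) :
    ∃ a : ℕ → ℝ≥0∞, (∀ q, ∑' i : {i | q ∈ A i}, a i ≤ cap q) ∧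
      ∀ i, ∃ q ∈ A i, ∑' j : {j | q ∈ A j}, a j = cap q := by
  let u : ℕ → κ → ℝ≥0∞ := Nat.rec 0 fun i v q =>
    v q + {i | q ∈ A i}.indicator (fun i => ⨅ q' ∈ A i, (cap q' - v q')) i
  let a : ℕ → ℝ≥0∞ := fun i => ⨅ q ∈ A i, (cap q - u i q)
  have hu_succ : ∀ i q, u (i + 1) q = u i q + {i | q ∈ A i}.indicator a i := fun _ _ => rfl
  have hu_sum : ∀ n q, ∑ i ∈ Finset.range n, {i | q ∈ A i}.indicator a i = u n q := by
    intro n q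
    induction n with
    | zero => rfl
    | succ n ih => rw [Finset.sum_range_succ, ih, hu_succ]
  have hu_le : ∀ n q, u n q ≤ cap q := by
    intro n q
    induction n with
    | zero => exact zero_le
    | succ n ih =>
      calc u (n + 1) q ≤ u n q + (cap q - u n q) := by
            rw [hu_succ]
            gcongr
            exact indicator_apply_le' (fun hq => iInf₂_le q hq) fun _ => zero_le
        _ = cap q := add_tsub_cancel_of_le ih
  have ha_le : ∀ q, ∑' i : {i | q ∈ A i}, a i ≤ cap q := fun q => by
    rw [tsum_subtype, ENNReal.tsum_eq_iSup_nat]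
    exact iSup_le fun n => (hu_sum n q).trans_le (hu_le n q)
  refine ⟨a, ha_le, fun i => ?_⟩
  obtain ⟨q, hq, hq_min⟩ := (A i).exists_min_image (fun q => cap q - u i q) (hA_fin i) (hA i)
  refine ⟨q, hq, (ha_le q).antisymm ?_⟩
  calc cap q = u i q + (cap q - u i q) := (add_tsub_cancel_of_le (hu_le i q)).symm
    _ ≤ u i q + {i | q ∈ A i}.indicator a i := by
        rw [indicator_of_mem (show i ∈ {i | q ∈ A i} from hq)]
        gcongr
        exact le_iInf₂ hq_min
    _ = ∑ j ∈ Finset.range (i + 1), {j | q ∈ A j}.indicator a j := by rw [hu_sum, hu_succ]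
    _ ≤ ∑' j : {j | q ∈ A j}, a j := by
        rw [tsum_subtype]
        exact ENNReal.sum_le_tsum _

/-- A sequence of partitions of `α`, each refining the previous one: `index k p` is the label of the
piece of the `k`-th partition that contains `p`. -/
structure NestedPartitions (α κ : Type*) where
  index : ℕ → α → κ
  index_eq_of_le : ∀ {j k : ℕ}, j ≤ k → ∀ {p q : α}, index k p = index k q → index j p = index j q

namespace NestedPartitions

variable {α κ : Type*} (P : NestedPartitions α κ)

/-- The piece with label `q` of the `k`-th partition. -/
def cell (k : ℕ) (q : κ) : Set α := P.index k ⁻¹' {q}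

lemma mem_cell_iff {k : ℕ} {q : κ} {p : α} : p ∈ P.cell k q ↔ P.index k p = q := Iff.rfl

/-- The cells of generation at most `n` that contain `p`, as pairs of a generation and a label. -/
def ancestors (n : ℕ) (p : α) : Set (ℕ × κ) := {Q | Q.1 ≤ n ∧ p ∈ P.cell Q.1 Q.2}

lemma finite_ancestors (n : ℕ) (p : α) : (P.ancestors n p).Finite :=
  ((finite_Iic n).image fun k => (k, P.index k p)).subset fun Q hQ =>
    ⟨Q.1, hQ.1, Prod.ext rfl hQ.2⟩

lemma exists_frostman_masses (w : ℕ → ℝ≥0∞) (x : ℕ → α) (n : ℕ → ℕ) :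
    ∃ a : ℕ → ℝ≥0∞, (∀ Q, ∑' i : {i | Q ∈ P.ancestors (n i) (x i)}, a i ≤ w Q.1) ∧
      ∃ T : Set (ℕ × κ), (∀ i, ∃ Q ∈ T, Q ∈ P.ancestors (n i) (x i)) ∧
        ∑' Q : T, w Q.1.1 ≤ ∑' i, a i := by
  classical
  obtain ⟨a, ha_le, ha_sat⟩ := exists_greedy_filling (fun i => P.ancestors (n i) (x i))
    (fun i => P.finite_ancestors _ _) (fun i => ⟨(0, P.index 0 (x i)), Nat.zero_le _, rfl⟩)
    fun Q => w Q.1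
  -- Among the saturated cells containing a given leaf we keep the coarsest one; by nestedness the
  -- retained cells are pairwise disjoint.
  let sat : Set (ℕ × κ) := {Q | ∑' i : {i | Q ∈ P.ancestors (n i) (x i)}, a i = w Q.1}
  have h_sat : ∀ i, ∃ k ≤ n i, (k, P.index k (x i)) ∈ sat := fun i => by
    obtain ⟨⟨k, q⟩, ⟨hk, hq⟩, hQ⟩ := ha_sat i
    obtain rfl : P.index k (x i) = q := hq
    exact ⟨k, hk, hQ⟩
  let T : Set (ℕ × κ) := {Q ∈ sat | ∀ p ∈ P.cell Q.1 Q.2, ∀ j < Q.1, (j, P.index j p) ∉ sat}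
  refine ⟨a, ha_le, T, fun i => ?_, ?_⟩
  · let k := Nat.find (h_sat i)
    obtain ⟨hk_le, hk_sat⟩ := Nat.find_spec (h_sat i)
    refine ⟨(k, P.index k (x i)), ⟨hk_sat, fun p hp j hj => ?_⟩, hk_le, rfl⟩
    rw [P.index_eq_of_le hj.le hp]
    exact fun h => Nat.find_min (h_sat i) hj ⟨hj.le.trans hk_le, h⟩
  · have h_disj : T.PairwiseDisjoint fun Q => {i | Q ∈ P.ancestors (n i) (x i)} := by
      rintro ⟨j, q⟩ hQ ⟨k, r⟩ hR hne
      refine disjoint_left.2 fun i ⟨_, hq⟩ ⟨_, hr⟩ => hne ?_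
      obtain rfl : P.index j (x i) = q := hq
      obtain rfl : P.index k (x i) = r := hr
      rcases lt_trichotomy j k with hjk | rfl | hkj
      · exact (hR.2 (x i) rfl j hjk hQ.1).elim
      · rfl
      · exact (hQ.2 (x i) rfl k hkj hR.1).elim
    calc ∑' Q : T, w Q.1.1
        = ∑' Q : T, ∑' i : {i | Q.1 ∈ P.ancestors (n i) (x i)}, a i :=
          tsum_congr fun Q => Q.2.1.symm
      _ = ∑' i : ⋃ Q ∈ T, {i | Q ∈ P.ancestors (n i) (x i)}, a i :=
          (ENNReal.tsum_biUnion' h_disj).symm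
      _ ≤ ∑' i, a i := ENNReal.tsum_comp_le_tsum_of_injective Subtype.val_injective a

section StoppingTime

variable {U : Set α} {x p : α}

/-- The first generation at which the cell containing `p` lies inside `U`; it is `0` if there is no
such generation. -/
noncomputable def stoppingTime (U : Set α) (p : α) : ℕ :=
  sInf {k | P.cell k (P.index k p) ⊆ U}

/-- The largest cell containing `p` that lies inside `U`, provided there is one. -/
def leaf (U : Set α) (p : α) : Set α :=
  P.cell (P.stoppingTime U p) (P.index (P.stoppingTime U p) p)

lemma leaf_subset (hx : ∃ k, P.cell k (P.index k x) ⊆ U) : P.leaf U x ⊆ U :=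
  Nat.sInf_mem (s := {k | P.cell k (P.index k x) ⊆ U}) hx

lemma stoppingTime_eq_of_mem_leaf (hx : ∃ k, P.cell k (P.index k x) ⊆ U) (hp : p ∈ P.leaf U x) :
    P.stoppingTime U p = P.stoppingTime U x := by
  have hp_eq : P.index (P.stoppingTime U x) p = P.index (P.stoppingTime U x) x := hp
  have hp_sub : P.cell (P.stoppingTime U x) (P.index (P.stoppingTime U x) p) ⊆ U :=
    hp_eq ▸ P.leaf_subset hx
  have h_le : P.stoppingTime U p ≤ P.stoppingTime U x := Nat.sInf_le hp_sub
  refine h_le.antisymm (Nat.sInf_le ?_)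
  rw [mem_ofPred_eq, ← P.index_eq_of_le h_le hp_eq]
  exact P.leaf_subset ⟨_, hp_sub⟩

lemma leaf_eq_of_mem_leaf (hx : ∃ k, P.cell k (P.index k x) ⊆ U) (hp : p ∈ P.leaf U x) :
    P.leaf U p = P.leaf U x := by
  rw [leaf, P.stoppingTime_eq_of_mem_leaf hx hp, leaf, (hp : P.index _ p = _)]

lemma exists_cell_subset_of_mem_leaf (hx : ∃ k, P.cell k (P.index k x) ⊆ U)
    (hp : p ∈ P.leaf U x) : ∃ k, P.cell k (P.index k p) ⊆ U :=
  ⟨P.stoppingTime U x, (hp : P.index _ p = _) ▸ P.leaf_subset hx⟩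

lemma exists_seq_subset_iUnion_leaf [Countable κ] {X : Set α} (hX : X.Nonempty) (U : Set α) :
    ∃ x : ℕ → α, (∀ i, x i ∈ X) ∧ X ⊆ ⋃ i, P.leaf U (x i) := by
  let label : α → ℕ × κ := fun p => (P.stoppingTime U p, P.index (P.stoppingTime U p) p)
  obtain ⟨f, hf⟩ := (label '' X).to_countable.exists_eq_range (hX.image _)
  choose x hxX hxf using fun i => (hf ▸ mem_range_self i : f i ∈ label '' X)
  refine ⟨x, hxX, fun y hy => mem_iUnion.2 ?_⟩
  obtain ⟨i, hi⟩ := (hf ▸ mem_image_of_mem label hy : label y ∈ range f)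
  obtain ⟨h_time, h_index⟩ := Prod.mk.inj (hi.symm.trans (hxf i).symm)
  exact ⟨i, by rw [leaf, mem_cell_iff, ← h_time, h_index, h_time]⟩

end StoppingTime

end NestedPartitions

section SpreadMass

variable {α ι : Type*} [MeasurableSpace α] [Countable ι] {μ : Measure α} {S : ι → Set α}

lemma setLIntegral_tsum_indicator_div_le (hS : ∀ i, MeasurableSet (S i)) (a : ι → ℝ≥0∞)
    {B : Set α} {I : Set ι} {t : ℝ≥0∞}
    (h : ∀ i, (S i ∩ B).Nonempty → i ∈ I ∧ μ (S i ∩ B) ≤ t * μ (S i)) :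
    ∫⁻ p in B, ∑' i, (S i).indicator (fun _ => a i / μ (S i)) p ∂μ ≤ t * ∑' i : I, a i := by
  rw [lintegral_tsum fun i => (measurable_const.indicator (hS i)).aemeasurable, tsum_subtype,
    ← ENNReal.tsum_mul_left]
  refine ENNReal.tsum_le_tsum fun i => ?_
  rw [lintegral_indicator_const (hS i), Measure.restrict_apply (hS i)]
  rcases (S i ∩ B).eq_empty_or_nonempty with h_empty | h_ne
  · rw [h_empty, measure_empty, mul_zero]
    exact zero_le
  · obtain ⟨hi, h_le⟩ := h i h_ne
    calc a i / μ (S i) * μ (S i ∩ B) ≤ a i / μ (S i) * (t * μ (S i)) := by gcongr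
      _ = t * (μ (S i) * (a i / μ (S i))) := by ring
      _ ≤ t * I.indicator a i := by
          rw [indicator_of_mem hi]
          gcongr
          exact ENNReal.mul_div_le

lemma lintegral_tsum_indicator_div (hS : ∀ i, MeasurableSet (S i)) (hS_zero : ∀ i, μ (S i) ≠ 0)
    (hS_top : ∀ i, μ (S i) ≠ ∞) (a : ι → ℝ≥0∞) :
    ∫⁻ p, ∑' i, (S i).indicator (fun _ => a i / μ (S i)) p ∂μ = ∑' i, a i := by
  rw [lintegral_tsum fun i => (measurable_const.indicator (hS i)).aemeasurable]
  exact tsum_congr fun i => by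
    rw [lintegral_indicator_const (hS i), ENNReal.div_mul_cancel (hS_zero i) (hS_top i)]

end SpreadMass

namespace NestedPartitions

variable {α κ : Type*} [MeasurableSpace α] (P : NestedPartitions α κ) {μ : Measure α}
  {w : ℕ → ℝ≥0∞} {U : Set α}

section LeafDensity

variable {x : ℕ → α} {a : ℕ → ℝ≥0∞}

lemma setLIntegral_cell_tsum_leaf_le_mul {p : α} {k : ℕ}
    (h_meas : ∀ k q, MeasurableSet (P.cell k q)) (hμ_zero : μ (P.leaf U p) ≠ 0)
    (hμ_top : μ (P.leaf U p) ≠ ∞) (hx : ∀ i, ∃ k, P.cell k (P.index k (x i)) ⊆ U)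
    (hp : ∃ k, P.cell k (P.index k p) ⊆ U) (hk : P.stoppingTime U p ≤ k) :
    ∫⁻ y in P.cell k (P.index k p),
      ∑' i, (P.leaf U (x i)).indicator (fun _ => a i / μ (P.leaf U (x i))) y ∂μ ≤
        μ (P.cell k (P.index k p)) / μ (P.leaf U p) *
          ∑' i : {i | (P.stoppingTime U p, P.index (P.stoppingTime U p) p) ∈
            P.ancestors (P.stoppingTime U (x i)) (x i)}, a i := by
  refine setLIntegral_tsum_indicator_div_le (S := fun i => P.leaf U (x i)) (fun i => h_meas _ _) a
    ?_
  rintro i ⟨y, hy, hyk⟩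
  have hy_leaf : y ∈ P.leaf U p := P.index_eq_of_le hk hyk
  have h_time : P.stoppingTime U (x i) = P.stoppingTime U p := by
    rw [← P.stoppingTime_eq_of_mem_leaf (hx i) hy, P.stoppingTime_eq_of_mem_leaf hp hy_leaf]
  have h_leaf : P.leaf U (x i) = P.leaf U p := by
    rw [← P.leaf_eq_of_mem_leaf (hx i) hy, P.leaf_eq_of_mem_leaf hp hy_leaf]
  refine ⟨⟨h_time.ge, h_leaf.subset rfl⟩, ?_⟩
  rw [h_leaf, ENNReal.div_mul_cancel hμ_zero hμ_top]
  exact measure_mono inter_subset_right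

lemma setLIntegral_cell_tsum_leaf_le (h_meas : ∀ k q, MeasurableSet (P.cell k q))
    (hμ_zero : ∀ k p, μ (P.cell k (P.index k p)) ≠ 0)
    (hμ_top : ∀ k p, μ (P.cell k (P.index k p)) ≠ ∞)
    (hw : ∀ j k, j ≤ k → ∀ p,
      w j * μ (P.cell k (P.index k p)) ≤ w k * μ (P.cell j (P.index j p)))
    (hx : ∀ i, ∃ k, P.cell k (P.index k (x i)) ⊆ U)
    (ha : ∀ Q, ∑' i : {i | Q ∈ P.ancestors (P.stoppingTime U (x i)) (x i)}, a i ≤ w Q.1)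
    (k : ℕ) (q : κ) :
    ∫⁻ p in P.cell k q,
      ∑' i, (P.leaf U (x i)).indicator (fun _ => a i / μ (P.leaf U (x i))) p ∂μ ≤ w k := by
  by_cases h_coarse : ∃ i₀, P.stoppingTime U (x i₀) ≤ k ∧ (P.leaf U (x i₀) ∩ P.cell k q).Nonempty
  · obtain ⟨i₀, hi₀, p, hp, hpq⟩ := h_coarse
    obtain rfl : P.index k p = q := hpq
    have hj : P.stoppingTime U p ≤ k := (P.stoppingTime_eq_of_mem_leaf (hx i₀) hp).trans_le hi₀
    calc _ ≤ _ := P.setLIntegral_cell_tsum_leaf_le_mul h_meas (hμ_zero _ _) (hμ_top _ _) hx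
          (P.exists_cell_subset_of_mem_leaf (hx i₀) hp) hj
      _ ≤ μ (P.cell k (P.index k p)) / μ (P.leaf U p) * w (P.stoppingTime U p) := by
          gcongr
          exact ha _
      _ = w (P.stoppingTime U p) * μ (P.cell k (P.index k p)) / μ (P.leaf U p) := by
          rw [mul_comm, mul_div_assoc]
      _ ≤ w k := ENNReal.div_le_of_le_mul (hw _ k hj p)
  · push Not at h_coarse
    refine (setLIntegral_tsum_indicator_div_le (fun i => h_meas _ _) a
      (I := {i | (k, q) ∈ P.ancestors (P.stoppingTime U (x i)) (x i)}) (t := 1) ?_).trans ?_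
    · rintro i ⟨p, hp, hpk⟩
      have h_lt : k < P.stoppingTime U (x i) := by
        by_contra! h_le
        exact (h_coarse i h_le).subset ⟨hp, hpk⟩
      refine ⟨⟨h_lt.le, (P.index_eq_of_le h_lt.le hp.symm).trans hpk⟩, ?_⟩
      rw [one_mul]
      exact measure_mono inter_subset_left
    · rw [one_mul]
      exact ha (k, q)

end LeafDensity

theorem exists_frostman_density [Countable κ] {X : Set α}
    (h_meas : ∀ k q, MeasurableSet (P.cell k q))
    (hμ_zero : ∀ k p, μ (P.cell k (P.index k p)) ≠ 0)
    (hμ_top : ∀ k p, μ (P.cell k (P.index k p)) ≠ ∞)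
    (hw : ∀ j k, j ≤ k → ∀ p,
      w j * μ (P.cell k (P.index k p)) ≤ w k * μ (P.cell j (P.index j p)))
    (hXU : ∀ x ∈ X, ∃ k, P.cell k (P.index k x) ⊆ U) :
    ∃ g : α → ℝ≥0∞, Measurable g ∧ Function.support g ⊆ U ∧
      (∀ k q, ∫⁻ p in P.cell k q, g p ∂μ ≤ w k) ∧
      ∃ T : Set (ℕ × κ), X ⊆ ⋃ Q ∈ T, P.cell Q.1 Q.2 ∧ ∑' Q : T, w Q.1.1 ≤ ∫⁻ p, g p ∂μ := by
  rcases X.eq_empty_or_nonempty with rfl | hX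
  · exact ⟨0, measurable_zero, by simp, by simp, ∅, by simp, by simp⟩
  obtain ⟨x, hxX, hX_sub⟩ := P.exists_seq_subset_iUnion_leaf hX U
  have hx : ∀ i, ∃ k, P.cell k (P.index k (x i)) ⊆ U := fun i => hXU _ (hxX i)
  obtain ⟨a, ha, T, hT_anc, hT_sum⟩ :=
    P.exists_frostman_masses w x fun i => P.stoppingTime U (x i)
  have h_leaf : ∀ i, MeasurableSet (P.leaf U (x i)) := fun i => h_meas _ _
  refine ⟨_, Measurable.tsum fun i => measurable_const.indicator (h_leaf i), ?_,
    P.setLIntegral_cell_tsum_leaf_le h_meas hμ_zero hμ_top hw hx ha, T, ?_, ?_⟩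
  · intro p hp
    rw [Function.mem_support, Ne, ENNReal.tsum_eq_zero, not_forall] at hp
    obtain ⟨i, hi⟩ := hp
    exact P.leaf_subset (hx i) (mem_of_indicator_ne_zero hi)
  · intro y hy
    obtain ⟨i, hi⟩ := mem_iUnion.1 (hX_sub hy)
    obtain ⟨Q, hQT, hQ_le, hQ⟩ := hT_anc i
    exact mem_biUnion hQT ((P.index_eq_of_le hQ_le hi).trans hQ)
  · rw [lintegral_tsum_indicator_div h_leaf (fun i => hμ_zero _ _) fun i => hμ_top _ _]
    exact hT_sum

end NestedPartitions

end Frostman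

section DyadicSquares

lemma floor_two_pow_mul_eq_div {j k : ℕ} (hjk : j ≤ k) (x : ℝ) :
    ⌊2 ^ j * x⌋ = ⌊2 ^ k * x⌋ / 2 ^ (k - j) := by
  have h := Int.floor_div_natCast (2 ^ k * x) (2 ^ (k - j))
  push_cast at h
  rw [← h, ← pow_mul_pow_sub 2 hjk]
  congr 1
  field_simp

lemma preimage_floor_two_pow_mul (k : ℕ) (m : ℤ) :
    (fun x : ℝ => ⌊2 ^ k * x⌋) ⁻¹' {m} = Ico (m / 2 ^ k : ℝ) ((m + 1) / 2 ^ k) := by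
  ext x
  rw [mem_preimage, mem_singleton_iff, Int.floor_eq_iff, mem_Ico, div_le_iff₀' (by positivity),
    lt_div_iff₀' (by positivity)]

lemma ofReal_two_pow_inv (k : ℕ) : ENNReal.ofReal (2 ^ k)⁻¹ = 2⁻¹ ^ k := by
  rw [ENNReal.ofReal_inv_of_pos (by positivity), ENNReal.ofReal_pow zero_le_two,
    ENNReal.ofReal_ofNat, ENNReal.inv_pow]

lemma ofReal_dyadic_length (k : ℕ) (m : ℤ) :
    ENNReal.ofReal ((m + 1) / 2 ^ k - m / 2 ^ k) = 2⁻¹ ^ k := by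
  rw [← sub_div, add_sub_cancel_left, one_div, ofReal_two_pow_inv]

lemma abs_floor_sub_floor_le_one {a b : ℝ} (h : |a - b| ≤ 1) : |⌊a⌋ - ⌊b⌋| ≤ 1 := by
  have hab : ⌊a⌋ ≤ ⌊b⌋ + 1 := by
    rw [← Int.floor_add_one]
    exact Int.floor_mono (by linarith [le_of_abs_le h])
  have hba : ⌊b⌋ ≤ ⌊a⌋ + 1 := by
    rw [← Int.floor_add_one]
    exact Int.floor_mono (by linarith [neg_le_of_abs_le h])
  rw [abs_le]
  constructor <;> linarith

/-- The partitions of the plane into the half-open squares of side `2⁻ᵏ` with corners in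
`2⁻ᵏ ℤ²`. -/
noncomputable def dyadicSquares : NestedPartitions (ℝ × ℝ) (ℤ × ℤ) where
  index k p := (⌊2 ^ k * p.1⌋, ⌊2 ^ k * p.2⌋)
  index_eq_of_le hjk p q h := by
    rw [Prod.mk.injEq] at h
    simp only [floor_two_pow_mul_eq_div hjk, h]

lemma dyadicSquares_cell_eq_prod (k : ℕ) (q : ℤ × ℤ) :
    dyadicSquares.cell k q = Ico (q.1 / 2 ^ k : ℝ) ((q.1 + 1) / 2 ^ k) ×ˢ
      Ico (q.2 / 2 ^ k : ℝ) ((q.2 + 1) / 2 ^ k) := by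
  simp only [← preimage_floor_two_pow_mul]
  ext p
  exact Prod.ext_iff

lemma measurableSet_dyadicSquares_cell (k : ℕ) (q : ℤ × ℤ) :
    MeasurableSet (dyadicSquares.cell k q) := by
  rw [dyadicSquares_cell_eq_prod]
  exact measurableSet_Ico.prod measurableSet_Ico

lemma volume_dyadicSquares_cell (k : ℕ) (q : ℤ × ℤ) :
    volume (dyadicSquares.cell k q) = 4⁻¹ ^ k := by
  rw [dyadicSquares_cell_eq_prod, Measure.volume_eq_prod, Measure.prod_prod, Real.volume_Ico,
    Real.volume_Ico, ofReal_dyadic_length, ofReal_dyadic_length, ← mul_pow,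
    ← ENNReal.mul_inv (by simp) (by simp)]
  norm_num

lemma ediam_dyadicSquares_cell_le (k : ℕ) (q : ℤ × ℤ) :
    Metric.ediam (dyadicSquares.cell k q) ≤ 2⁻¹ ^ k := by
  rw [dyadicSquares_cell_eq_prod]
  refine Metric.ediam_le fun x hx y hy => max_le ?_ ?_
  · rw [← ofReal_dyadic_length k q.1, ← Real.ediam_Ico]
    exact Metric.edist_le_ediam_of_mem hx.1 hy.1
  · rw [← ofReal_dyadic_length k q.2, ← Real.ediam_Ico]
    exact Metric.edist_le_ediam_of_mem hx.2 hy.2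

lemma hausdorffMeasure_eq_zero_of_forall_exists_dyadicSquares_cover {s : ℝ} (hs : 0 < s)
    {X : Set (ℝ × ℝ)}
    (h : ∀ ε ≠ 0, ∃ T : Set (ℕ × ℤ × ℤ), X ⊆ ⋃ Q ∈ T, dyadicSquares.cell Q.1 Q.2 ∧
      ∑' Q : T, ((2⁻¹ : ℝ≥0∞) ^ s) ^ Q.1.1 ≤ ε) : μH[s] X = 0 := by
  refine hausdorffMeasure_eq_zero_of_forall_exists_cover hs
    (fun Q : ℕ × ℤ × ℤ => dyadicSquares.cell Q.1 Q.2) fun ε hε => ?_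
  obtain ⟨T, hXT, hT⟩ := h ε hε
  refine ⟨T, hXT, (ENNReal.tsum_le_tsum fun Q => ?_).trans hT⟩
  calc Metric.ediam (dyadicSquares.cell Q.1.1 Q.1.2) ^ s ≤ (2⁻¹ ^ Q.1.1) ^ s := by
        gcongr
        exact ediam_dyadicSquares_cell_le _ _
    _ = ((2⁻¹ : ℝ≥0∞) ^ s) ^ Q.1.1 := by
        rw [← ENNReal.rpow_natCast, ← ENNReal.rpow_natCast, ← ENNReal.rpow_mul,
          ← ENNReal.rpow_mul, mul_comm]

lemma exists_dyadicSquares_cell_subset {U : Set (ℝ × ℝ)} (hU : IsOpen U) {p : ℝ × ℝ} (hp : p ∈ U) :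
    ∃ k, dyadicSquares.cell k (dyadicSquares.index k p) ⊆ U := by
  obtain ⟨ε, hε, h_ball⟩ := EMetric.isOpen_iff.1 hU p hp
  have h_lim : Tendsto (fun k : ℕ => (2⁻¹ : ℝ≥0∞) ^ k) atTop (𝓝 0) :=
    ENNReal.tendsto_pow_atTop_nhds_zero_of_lt_one (by norm_num)
  obtain ⟨k, hk⟩ := (h_lim.eventually_lt_const hε).exists
  exact ⟨k, fun q hq => h_ball <| ((Metric.edist_le_ediam_of_mem hq rfl).trans
    (ediam_dyadicSquares_cell_le k _)).trans_lt hk⟩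

lemma exists_dyadicSquares_cell_subset_inter {U : Set (ℝ × ℝ)} (hU : IsOpen U) {r : ℤ × ℤ}
    {p : ℝ × ℝ} (hp : p ∈ U ∩ dyadicSquares.cell 0 r) :
    ∃ k, dyadicSquares.cell k (dyadicSquares.index k p) ⊆ U ∩ dyadicSquares.cell 0 r := by
  obtain ⟨k, hk⟩ := exists_dyadicSquares_cell_subset hU hp.1
  exact ⟨k, subset_inter hk fun q hq =>
    (dyadicSquares.index_eq_of_le (Nat.zero_le k) hq).trans hp.2⟩

lemma closedEBall_subset_iUnion_dyadicSquares_cell (k : ℕ) (p : ℝ × ℝ) :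
    Metric.closedEBall p (2⁻¹ ^ k) ⊆ ⋃ e ∈ Finset.Icc (-1 : ℤ) 1 ×ˢ Finset.Icc (-1 : ℤ) 1,
      dyadicSquares.cell k (dyadicSquares.index k p + e) := by
  have h_floor : ∀ x y : ℝ, edist y x ≤ 2⁻¹ ^ k →
      ⌊2 ^ k * y⌋ - ⌊2 ^ k * x⌋ ∈ Finset.Icc (-1 : ℤ) 1 := by
    intro x y hxy
    rw [← ofReal_two_pow_inv, edist_le_ofReal (by positivity), Real.dist_eq] at hxy
    rw [Finset.mem_Icc, ← abs_le]
    refine abs_floor_sub_floor_le_one ?_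
    calc |2 ^ k * y - 2 ^ k * x| = 2 ^ k * |y - x| := by
          rw [← mul_sub, abs_mul, abs_of_pos (by positivity)]
      _ ≤ 2 ^ k * (2 ^ k)⁻¹ := by gcongr
      _ = 1 := mul_inv_cancel₀ (by positivity)
  intro q hq
  obtain ⟨h₁, h₂⟩ := max_le_iff.1 (Metric.mem_closedEBall.1 hq)
  refine mem_biUnion (x := dyadicSquares.index k q - dyadicSquares.index k p) ?_
    (add_sub_cancel _ _).symm
  exact Finset.mem_product.2 ⟨h_floor _ _ h₁, h_floor _ _ h₂⟩

lemma measure_closedEBall_le_of_forall_dyadicSquares_cell_le {μ : Measure (ℝ × ℝ)} {k : ℕ}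
    {b : ℝ≥0∞} (h : ∀ q, μ (dyadicSquares.cell k q) ≤ b) (p : ℝ × ℝ) :
    μ (Metric.closedEBall p (2⁻¹ ^ k)) ≤ 9 * b :=
  calc μ (Metric.closedEBall p (2⁻¹ ^ k))
      ≤ ∑ e ∈ Finset.Icc (-1 : ℤ) 1 ×ˢ Finset.Icc (-1 : ℤ) 1,
          μ (dyadicSquares.cell k (dyadicSquares.index k p + e)) :=
        (measure_mono (closedEBall_subset_iUnion_dyadicSquares_cell k p)).trans
          (measure_biUnion_finset_le _ _)
    _ ≤ ∑ _e ∈ Finset.Icc (-1 : ℤ) 1 ×ˢ Finset.Icc (-1 : ℤ) 1, b :=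
        Finset.sum_le_sum fun e _ => h _
    _ = 9 * b := by simp

lemma lintegral_inv_edist_le_of_dyadicSquares {μ : Measure (ℝ × ℝ)} {θ : ℝ≥0∞}
    (h : ∀ k q, μ (dyadicSquares.cell k q) ≤ θ ^ k) (p : ℝ × ℝ) :
    ∫⁻ q, (edist p q)⁻¹ ∂μ ≤ μ univ + 18 * (1 - 2 * θ)⁻¹ :=
  calc ∫⁻ q, (edist p q)⁻¹ ∂μ
      ≤ μ univ + ∑' k, 2 ^ (k + 1) * (9 * θ ^ k) :=
        lintegral_inv_edist_le_tsum_closedEBall μ p fun k =>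
          measure_closedEBall_le_of_forall_dyadicSquares_cell_le (h k) p
    _ = μ univ + 18 * (1 - 2 * θ)⁻¹ := by
        rw [← ENNReal.tsum_geometric, ← ENNReal.tsum_mul_left]
        congr 2 with k
        ring

end DyadicSquares

section Projections

/-- The integral of `g` over the line of all points projected to `z.2` by the projection with
parameter `z.1`. It is the density at `z.2` of the image of the measure `g dp` under this
projection. -/
noncomputable def lineMarginal (g : ℝ × ℝ → ℝ≥0∞) (z : ℝ × ℝ) : ℝ≥0∞ :=
  ∫⁻ y, g (z.2 + z.1 * y, y)

variable {g : ℝ × ℝ → ℝ≥0∞}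

lemma measurable_lineMarginal (hg : Measurable g) : Measurable (lineMarginal g) := by
  unfold lineMarginal
  fun_prop

lemma lintegral_mul_lineMarginal (ν : Measure ℝ) [SFinite ν] {φ : ℝ × ℝ → ℝ≥0∞}
    (hφ : Measurable φ) (hg : Measurable g) :
    ∫⁻ z, φ z * lineMarginal g z ∂ν.prod volume =
      ∫⁻ p, g p * ∫⁻ l, φ (l, p.1 - l * p.2) ∂ν := by
  have h_line : ∀ l, ∫⁻ t, φ (l, t) * lineMarginal g (l, t) =
      ∫⁻ p : ℝ × ℝ, φ (l, p.1 - l * p.2) * g p := fun l => by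
    calc ∫⁻ t, φ (l, t) * lineMarginal g (l, t)
        = ∫⁻ t, ∫⁻ y, φ (l, t) * g (t + l * y, y) :=
          lintegral_congr fun t => (lintegral_const_mul _ (by fun_prop)).symm
      _ = ∫⁻ y, ∫⁻ t, φ (l, t) * g (t + l * y, y) := lintegral_lintegral_swap (by fun_prop)
      _ = ∫⁻ y, ∫⁻ x, φ (l, x - l * y) * g (x, y) := lintegral_congr fun y => by
          rw [← lintegral_sub_right_eq_self _ (l * y)]
          simp only [sub_add_cancel]
      _ = ∫⁻ p : ℝ × ℝ, φ (l, p.1 - l * p.2) * g p := by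
          rw [Measure.volume_eq_prod, lintegral_prod_symm _ (by fun_prop)]
  calc ∫⁻ z, φ z * lineMarginal g z ∂ν.prod volume
      = ∫⁻ l, ∫⁻ p : ℝ × ℝ, φ (l, p.1 - l * p.2) * g p ∂volume ∂ν := by
        rw [lintegral_prod (fun z => φ z * lineMarginal g z)
          (hφ.mul (measurable_lineMarginal hg)).aemeasurable]
        exact lintegral_congr h_line
    _ = ∫⁻ p : ℝ × ℝ, ∫⁻ l, φ (l, p.1 - l * p.2) * g p ∂ν := lintegral_lintegral_swap (by fun_prop)
    _ = ∫⁻ p, g p * ∫⁻ l, φ (l, p.1 - l * p.2) ∂ν := lintegral_congr fun p => by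
        rw [lintegral_mul_const _ (by fun_prop), mul_comm]

lemma lintegral_comp_add_mul {f : ℝ → ℝ≥0∞} (hf : Measurable f) (x : ℝ) {d : ℝ} (hd : d ≠ 0) :
    ∫⁻ l, f (x + l * d) = ‖d‖ₑ⁻¹ * ∫⁻ t, f t := by
  calc ∫⁻ l, f (x + l * d) = ∫⁻ t, f (x + t) ∂Measure.map (· * d) volume := by
        rw [lintegral_map (by fun_prop) (by fun_prop)]
    _ = ‖d‖ₑ⁻¹ * ∫⁻ t, f t := by
        rw [Real.map_volume_mul_right hd, lintegral_smul_measure, lintegral_add_left_eq_self,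
          smul_eq_mul, ← Real.enorm_eq_ofReal_abs, enorm_inv hd]

variable {E : Set ℝ} {M : ℝ≥0∞}

lemma edist_mk_add_mul_le (p : ℝ × ℝ) (y : ℝ) {l : ℝ} (hM : 1 ≤ M) (hl : ‖l‖ₑ ≤ M) :
    edist p (p.1 + l * (y - p.2), y) ≤ M * ‖y - p.2‖ₑ := by
  rw [edist_comm, Prod.edist_eq]
  refine max_le ?_ ?_
  · rw [edist_eq_enorm_sub, add_sub_cancel_left, enorm_mul]
    gcongr
  · rw [edist_eq_enorm_sub]
    exact le_mul_of_one_le_left zero_le hM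

lemma setLIntegral_lineMarginal_le (hg : Measurable g) (hE : MeasurableSet E) (hM : 1 ≤ M)
    (hEM : ∀ l ∈ E, ‖l‖ₑ ≤ M) (p : ℝ × ℝ) :
    ∫⁻ l in E, lineMarginal g (l, p.1 - l * p.2) ≤ M * ∫⁻ q, g q * (edist p q)⁻¹ := by
  let F : ℝ → ℝ → ℝ≥0∞ := fun y x => g (x, y) * (edist p (x, y))⁻¹
  have hF : ∀ y, Measurable (F y) := fun y => by fun_prop
  have h_slice : ∀ y ≠ p.2, ∫⁻ l in E, g (p.1 - l * p.2 + l * y, y) ≤ ∫⁻ x, M * F y x := by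
    intro y hy
    have hd : y - p.2 ≠ 0 := sub_ne_zero.2 hy
    calc ∫⁻ l in E, g (p.1 - l * p.2 + l * y, y)
        ≤ ∫⁻ l in E, M * ‖y - p.2‖ₑ * F y (p.1 + l * (y - p.2)) := by
          refine setLIntegral_mono' hE fun l hl => ?_
          have h_point : p.1 - l * p.2 + l * y = p.1 + l * (y - p.2) := by ring
          have h_ne : p ≠ (p.1 + l * (y - p.2), y) := fun h => hy (congrArg Prod.snd h).symm
          rw [h_point, mul_left_comm]
          refine le_mul_of_one_le_right zero_le ?_
          rw [← div_eq_mul_inv, ENNReal.le_div_iff_mul_le (.inl (edist_pos.2 h_ne).ne')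
            (.inl (edist_ne_top _ _)), one_mul]
          exact edist_mk_add_mul_le p y hM (hEM l hl)
      _ ≤ ∫⁻ l, M * ‖y - p.2‖ₑ * F y (p.1 + l * (y - p.2)) := setLIntegral_le_lintegral _ _
      _ = M * ‖y - p.2‖ₑ * (‖y - p.2‖ₑ⁻¹ * ∫⁻ x, F y x) := by
          rw [lintegral_const_mul _ (by fun_prop), lintegral_comp_add_mul (hF y) _ hd]
      _ = ∫⁻ x, M * F y x := by
          rw [mul_assoc, ENNReal.mul_inv_cancel_left (enorm_ne_zero.2 hd) enorm_ne_top,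
            lintegral_const_mul _ (hF y)]
  calc ∫⁻ l in E, lineMarginal g (l, p.1 - l * p.2)
      = ∫⁻ y, ∫⁻ l in E, g (p.1 - l * p.2 + l * y, y) := lintegral_lintegral_swap (by fun_prop)
    _ ≤ ∫⁻ y, ∫⁻ x, M * F y x :=
        lintegral_mono_ae ((Measure.ae_ne volume p.2).mono h_slice)
    _ = ∫⁻ q, M * (g q * (edist p q)⁻¹) := by
        rw [Measure.volume_eq_prod, lintegral_prod_symm _ (by fun_prop)]
    _ = M * ∫⁻ q, g q * (edist p q)⁻¹ := lintegral_const_mul _ (by fun_prop)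

lemma lintegral_sq_lineMarginal_le (hg : Measurable g) (hE : MeasurableSet E) (hM : 1 ≤ M)
    (hEM : ∀ l ∈ E, ‖l‖ₑ ≤ M) :
    ∫⁻ z, lineMarginal g z ^ 2 ∂(volume.restrict E).prod volume ≤
      M * ∫⁻ p, g p * ∫⁻ q, g q * (edist p q)⁻¹ := by
  have h_energy : Measurable fun p => g p * ∫⁻ q, g q * (edist p q)⁻¹ := by fun_prop
  simp only [sq]
  rw [lintegral_mul_lineMarginal _ (measurable_lineMarginal hg) hg,
    ← lintegral_const_mul _ h_energy]
  refine lintegral_mono fun p => ?_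
  rw [mul_left_comm]
  gcongr
  exact setLIntegral_lineMarginal_le hg hE hM hEM p

lemma mul_lintegral_le_setLIntegral_lineMarginal (ν : Measure ℝ) [SFinite ν] (hg : Measurable g)
    {O : Set (ℝ × ℝ)} (hO : MeasurableSet O) {c : ℝ≥0∞}
    (hc : ∀ p ∈ Function.support g, c ≤ ν {l | (l, p.1 - l * p.2) ∈ O}) :
    c * ∫⁻ p, g p ≤ ∫⁻ z in O, lineMarginal g z ∂ν.prod volume := by
  calc c * ∫⁻ p, g p = ∫⁻ p, c * g p := (lintegral_const_mul _ hg).symm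
    _ ≤ ∫⁻ p, g p * ∫⁻ l, O.indicator 1 (l, p.1 - l * p.2) ∂ν := by
        refine lintegral_mono fun p => ?_
        have h_section : MeasurableSet {l | (l, p.1 - l * p.2) ∈ O} :=
          hO.preimage (by fun_prop : Measurable fun l : ℝ => (l, p.1 - l * p.2))
        rw [mul_comm]
        by_cases hp : g p = 0
        · simp only [hp, zero_mul, le_refl]
        · gcongr
          exact (hc p hp).trans_eq (lintegral_indicator_one h_section).symm
    _ = ∫⁻ z, O.indicator 1 z * lineMarginal g z ∂ν.prod volume :=
        (lintegral_mul_lineMarginal _ (measurable_one.indicator hO) hg).symm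
    _ = ∫⁻ z in O, lineMarginal g z ∂ν.prod volume := by
        rw [← lintegral_indicator hO]
        refine lintegral_congr fun z => ?_
        by_cases hz : z ∈ O <;> simp [hz]

lemma sq_mul_lintegral_le_volume_mul (hg : Measurable g) (hg_top : ∫⁻ p, g p ≠ ∞)
    (hE : MeasurableSet E) (hM : 1 ≤ M) (hEM : ∀ l ∈ E, ‖l‖ₑ ≤ M) {O : Set (ℝ × ℝ)}
    (hO : MeasurableSet O) {c K : ℝ≥0∞}
    (hc : ∀ p ∈ Function.support g, c ≤ volume.restrict E {l | (l, p.1 - l * p.2) ∈ O})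
    (hK : ∀ p, ∫⁻ q, g q * (edist p q)⁻¹ ≤ K) :
    c ^ 2 * ∫⁻ p, g p ≤ volume O * (M * K) := by
  have h_vol : (volume.restrict E).prod volume O ≤ volume O :=
    Measure.prod_mono Measure.restrict_le_self le_rfl O
  have h_sq : c ^ 2 * (∫⁻ p, g p) * ∫⁻ p, g p ≤ volume O * (M * K) * ∫⁻ p, g p :=
    calc c ^ 2 * (∫⁻ p, g p) * ∫⁻ p, g p = (c * ∫⁻ p, g p) ^ 2 := by ring
      _ ≤ (∫⁻ z in O, lineMarginal g z ∂(volume.restrict E).prod volume) ^ 2 := by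
          gcongr
          exact mul_lintegral_le_setLIntegral_lineMarginal _ hg hO hc
      _ ≤ (volume.restrict E).prod volume O *
            ∫⁻ z, lineMarginal g z ^ 2 ∂(volume.restrict E).prod volume :=
          sq_setLIntegral_le _ _ (measurable_lineMarginal hg).aemeasurable
      _ ≤ volume O * (M * ∫⁻ p, g p * K) := by
          gcongr
          refine (lintegral_sq_lineMarginal_le hg hE hM hEM).trans ?_
          gcongr with p
          exact hK p
      _ = volume O * (M * K) * ∫⁻ p, g p := by
          rw [lintegral_mul_const _ hg]
          ring
  rcases eq_or_ne (∫⁻ p, g p) 0 with h_zero | h_pos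
  · simp only [h_zero, mul_zero, zero_le]
  · exact (ENNReal.mul_le_mul_iff_left h_pos hg_top).1 h_sq

end Projections

section NullDualLines

/-- The union of the dual lines of the points of `X`. The dual line of `p` is
`{(l, p.1 - l * p.2) | l : ℝ}`, so the vertical section of the union at `l` is the projection of
`X` with parameter `l`. -/
def dualLines (X : Set (ℝ × ℝ)) : Set (ℝ × ℝ) :=
  (fun z : ℝ × ℝ × ℝ => (z.1, z.2.1 - z.1 * z.2.2)) '' univ ×ˢ X

variable {E : Set ℝ} {M : ℝ≥0∞} {X : Set (ℝ × ℝ)}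

lemma mk_mem_dualLines {p : ℝ × ℝ} (hp : p ∈ X) (l : ℝ) : (l, p.1 - l * p.2) ∈ dualLines X :=
  ⟨(l, p), ⟨mem_univ l, hp⟩, rfl⟩

lemma mk_preimage_dualLines (X : Set (ℝ × ℝ)) (l : ℝ) :
    Prod.mk l ⁻¹' dualLines X = (fun p : ℝ × ℝ => p.1 - l * p.2) '' X := by
  ext t
  simp [dualLines]

lemma dualLines_mono {Y : Set (ℝ × ℝ)} (h : Y ⊆ X) : dualLines Y ⊆ dualLines X :=
  image_mono (prod_mono_right h)

lemma analyticSet_dualLines (hX : AnalyticSet X) : AnalyticSet (dualLines X) := by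
  have h_prod : AnalyticSet ((univ : Set ℝ) ×ˢ X) := by
    rw [univ_prod]
    exact hX.preimage continuous_snd
  exact h_prod.image_of_continuous (by fun_prop)

lemma pow_mul_pow_le_pow_mul_pow {a b : ℝ≥0∞} (hba : b ≤ a) {j k : ℕ} (hjk : j ≤ k) :
    a ^ j * b ^ k ≤ a ^ k * b ^ j := by
  obtain ⟨m, rfl⟩ := Nat.exists_eq_add_of_le hjk
  calc a ^ j * b ^ (j + m) = a ^ j * b ^ m * b ^ j := by ring
    _ ≤ a ^ j * a ^ m * b ^ j := by gcongr
    _ = a ^ (j + m) * b ^ j := by rw [pow_add]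

lemma exists_dyadicSquares_cover {θ : ℝ≥0∞} (hθ : 4⁻¹ ≤ θ) (hE : MeasurableSet E) (hM : 1 ≤ M)
    (hEM : ∀ l ∈ E, ‖l‖ₑ ≤ M) {r : ℤ × ℤ} (hX : X ⊆ dyadicSquares.cell 0 r) {O : Set (ℝ × ℝ)}
    (hO : IsOpen O) (hXO : dualLines X ∩ E ×ˢ univ ⊆ O) {c : ℝ≥0∞} (hc : c < volume E) :
    ∃ T : Set (ℕ × ℤ × ℤ), X ⊆ ⋃ Q ∈ T, dyadicSquares.cell Q.1 Q.2 ∧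
      c ^ 2 * ∑' Q : T, θ ^ Q.1.1 ≤
        volume O * (M * (1 + 18 * (1 - 2 * θ)⁻¹)) := by
  let U := {p : ℝ × ℝ | c < volume.restrict E {l | (l, p.1 - l * p.2) ∈ O}}
  have hU : IsOpen U :=
    (lowerSemicontinuous_measure_section (volume.restrict E) fun l : ℝ =>
      hO.preimage (by fun_prop : Continuous fun p : ℝ × ℝ => (l, p.1 - l * p.2))).isOpen_preimage c
  have hXU : X ⊆ U := fun p hp => by
    have h_section : E ⊆ {l | (l, p.1 - l * p.2) ∈ O} := fun l hl =>
      hXO ⟨mk_mem_dualLines hp l, hl, mem_univ _⟩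
    rw [mem_ofPred_eq, Measure.restrict_apply_superset h_section]
    exact hc
  obtain ⟨g, hg, hg_supp, hg_cell, T, hXT, hT⟩ := dyadicSquares.exists_frostman_density
    (X := X) (U := U ∩ dyadicSquares.cell 0 r) (μ := volume) (w := fun k => θ ^ k)
    measurableSet_dyadicSquares_cell (by simp [volume_dyadicSquares_cell])
    (by simp [volume_dyadicSquares_cell])
    (fun j k hjk _ => by
      simpa only [volume_dyadicSquares_cell] using pow_mul_pow_le_pow_mul_pow hθ hjk)
    (fun p hp => exists_dyadicSquares_cell_subset_inter hU ⟨hXU hp, hX hp⟩)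
  have hg_one : ∫⁻ p, g p ≤ 1 := by
    rw [← setLIntegral_eq_of_support_subset (hg_supp.trans inter_subset_right)]
    simpa using hg_cell 0 r
  have h_potential : ∀ p, ∫⁻ q, g q * (edist p q)⁻¹ ≤ 1 + 18 * (1 - 2 * θ)⁻¹ := fun p => by
    have h := lintegral_inv_edist_le_of_dyadicSquares (μ := volume.withDensity g) (θ := θ)
      (fun k q => by
        rw [withDensity_apply _ (measurableSet_dyadicSquares_cell k q)]
        exact hg_cell k q) p
    rw [lintegral_withDensity_eq_lintegral_mul _ hg (by fun_prop), withDensity_apply _ .univ,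
      setLIntegral_univ] at h
    exact h.trans (by gcongr)
  refine ⟨T, hXT, ?_⟩
  calc c ^ 2 * ∑' Q : T, θ ^ Q.1.1 ≤ c ^ 2 * ∫⁻ p, g p := by
        gcongr
    _ ≤ volume O * (M * (1 + 18 * (1 - 2 * θ)⁻¹)) :=
        sq_mul_lintegral_le_volume_mul hg (ne_top_of_le_ne_top ENNReal.one_ne_top hg_one) hE hM hEM
          hO.measurableSet (fun p hp => (hg_supp hp).1.le) h_potential

lemma exists_dyadicSquares_cover_tsum_le {θ : ℝ≥0∞} (hθ : 4⁻¹ ≤ θ) (hθ' : 2 * θ < 1)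
    (hE : MeasurableSet E) (hE_zero : volume E ≠ 0) (hM : 1 ≤ M) (hM_top : M ≠ ∞)
    (hEM : ∀ l ∈ E, ‖l‖ₑ ≤ M) {r : ℤ × ℤ} (hX : X ⊆ dyadicSquares.cell 0 r)
    (h_null : volume (dualLines X ∩ E ×ˢ univ) = 0) {ε : ℝ≥0∞} (hε : ε ≠ 0) :
    ∃ T : Set (ℕ × ℤ × ℤ), X ⊆ ⋃ Q ∈ T, dyadicSquares.cell Q.1 Q.2 ∧
      ∑' Q : T, θ ^ Q.1.1 ≤ ε := by
  obtain ⟨c, hc_zero, hc⟩ := exists_between (pos_iff_ne_zero.2 hE_zero)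
  set C : ℝ≥0∞ := M * (1 + 18 * (1 - 2 * θ)⁻¹)
  have hC_zero : C ≠ 0 := by simp [C, (zero_lt_one.trans_le hM).ne']
  have hC_top : C ≠ ∞ := by
    have h_gap : (1 : ℝ≥0∞) - 2 * θ ≠ 0 := (tsub_pos_of_lt hθ').ne'
    exact ENNReal.mul_ne_top hM_top (ENNReal.add_ne_top.2 ⟨ENNReal.one_ne_top,
      ENNReal.mul_ne_top (by simp) (ENNReal.inv_ne_top.2 h_gap)⟩)
  have hc_sq : c ^ 2 ≠ 0 := pow_ne_zero 2 hc_zero.ne'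
  have hc_top : c ^ 2 ≠ ∞ := ENNReal.pow_ne_top hc.ne_top
  obtain ⟨O, hO_sub, hO, hO_lt⟩ := (dualLines X ∩ E ×ˢ univ).exists_isOpen_lt_of_lt
    (c ^ 2 * ε / C) (by rw [h_null]; exact ENNReal.div_pos (mul_ne_zero hc_sq hε) hC_top)
  obtain ⟨T, hXT, hT⟩ := exists_dyadicSquares_cover hθ hE hM hEM hX hO hO_sub hc
  refine ⟨T, hXT, (ENNReal.mul_le_mul_iff_right hc_sq hc_top).1 (hT.trans ?_)⟩
  exact (ENNReal.le_div_iff_mul_le (.inl hC_zero) (.inl hC_top)).1 hO_lt.le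

lemma hausdorffMeasure_eq_zero_of_volume_dualLines_eq_zero {s : ℝ} (hs : 1 < s) (hs' : s ≤ 2)
    (hE : MeasurableSet E) (hE_zero : volume E ≠ 0) (hM : 1 ≤ M) (hM_top : M ≠ ∞)
    (hEM : ∀ l ∈ E, ‖l‖ₑ ≤ M) (h_null : volume (dualLines X ∩ E ×ˢ univ) = 0) :
    μH[s] X = 0 := by
  have hθ : (4⁻¹ : ℝ≥0∞) ≤ 2⁻¹ ^ s :=
    calc (4⁻¹ : ℝ≥0∞) = 2⁻¹ ^ (2 : ℝ) := by
          rw [ENNReal.rpow_two, ← ENNReal.inv_pow]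
          norm_num
      _ ≤ 2⁻¹ ^ s := ENNReal.rpow_le_rpow_of_exponent_ge (by norm_num) hs'
  have hθ' : 2 * (2⁻¹ : ℝ≥0∞) ^ s < 1 :=
    calc 2 * (2⁻¹ : ℝ≥0∞) ^ s < 2 * 2⁻¹ ^ (1 : ℝ) := ENNReal.mul_lt_mul_right two_ne_zero
          ENNReal.ofNat_ne_top (ENNReal.rpow_lt_rpow_of_exponent_gt (by norm_num) (by norm_num) hs)
      _ = 1 := by rw [ENNReal.rpow_one, ENNReal.mul_inv_cancel two_ne_zero ENNReal.ofNat_ne_top]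
  have h_cell : ∀ r, μH[s] (X ∩ dyadicSquares.cell 0 r) = 0 := fun r =>
    hausdorffMeasure_eq_zero_of_forall_exists_dyadicSquares_cover (zero_lt_one.trans hs)
      fun _ hε => exists_dyadicSquares_cover_tsum_le hθ hθ' hE hE_zero hM hM_top hEM
        inter_subset_right
        (measure_mono_null (by gcongr; exact dualLines_mono inter_subset_left) h_null) hε
  have h_cover : X ⊆ ⋃ r, X ∩ dyadicSquares.cell 0 r := fun p hp =>
    mem_iUnion.2 ⟨dyadicSquares.index 0 p, hp, rfl⟩
  exact measure_mono_null h_cover (measure_iUnion_null h_cell)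

lemma volume_eq_zero_of_volume_dualLines_eq_zero (hX : 1 < dimH X) (hE : MeasurableSet E)
    (h_null : volume (dualLines X ∩ E ×ˢ univ) = 0) : volume E = 0 := by
  obtain ⟨s, hs, hsX⟩ := ENNReal.lt_iff_exists_nnreal_btwn.1 (lt_min hX ENNReal.one_lt_two)
  have h_bounded : ∀ n : ℕ, volume (E ∩ Metric.closedBall 0 n) = 0 := fun n => by
    by_contra h_pos
    have h_enorm : ∀ l ∈ E ∩ Metric.closedBall 0 n, ‖l‖ₑ ≤ n + 1 := fun l hl => by
      refine le_add_right ?_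
      rw [← ofReal_norm, ENNReal.ofReal_le_natCast]
      exact mem_closedBall_zero_iff.1 hl.2
    have hs_two : (s : ℝ) ≤ 2 := by exact_mod_cast hsX.le.trans (min_le_right _ _)
    have h_top : μH[s] X = ∞ := hausdorffMeasure_of_lt_dimH (hsX.trans_le (min_le_left _ _))
    have h_zero : μH[s] X = 0 := hausdorffMeasure_eq_zero_of_volume_dualLines_eq_zero
      (M := n + 1) (by exact_mod_cast hs) hs_two
      (hE.inter measurableSet_closedBall) h_pos le_add_self (by finiteness)
      h_enorm (measure_mono_null (by gcongr; exact inter_subset_left) h_null)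
    exact ENNReal.top_ne_zero (h_top.symm.trans h_zero)
  rw [← inter_univ E, ← Metric.iUnion_closedBall_nat 0, inter_iUnion]
  exact measure_iUnion_null h_bounded

end NullDualLines

theorem stmt_2_general (X : Set (ℝ × ℝ)) (hX : AnalyticSet X) (hd : 1 < dimH X) :
    ∀ᵐ l : ℝ, 0 < volume ((fun p : ℝ × ℝ => p.1 - l * p.2) '' X) := by
  have h_meas : NullMeasurableSet (dualLines X) (volume.prod volume) :=
    nullMeasurableSet_of_analyticSet _ (analyticSet_dualLines hX)
  simpa only [mk_preimage_dualLines] using ae_measure_section_pos volume volume h_meas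
    fun E hE h_null => volume_eq_zero_of_volume_dualLines_eq_zero hd hE h_null

theorem stmt_2 (X : Set (ℝ × ℝ)) (hX : MeasurableSet X) (hd : 1 < dimH X) :
    ∀ᵐ l : ℝ, 0 < volume ((fun p : ℝ × ℝ => p.1 - l * p.2) '' X) :=
  stmt_2_general X hX.analyticSet hd
end

section
/- If K₁ and K₂ are Borel subsets of ℝ with HD(K₁) + HD(K₂) > 1, then for Lebesgue-almost every λ ∈ ℝ, the set K₁ - λK₂ = {x - λy : x ∈ K₁, y ∈ K₂} has positive Lebesgue measure. -/
open MeasureTheory Set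

/-!
Since `dimH K₁ + dimH K₂ > 1`, Frostman's lemma gives probability measures `μ` on `K₁` and `ν` on
`K₂` with `μ (closedBall x r) ≤ A r ^ s`, `ν (closedBall x r) ≤ B r ^ t` and `s + t > 1`, so that
`θ = μ.prod ν` has finite Riesz 1-energy. The maps `π_l (x, y) = x - l * y` are transversal: the
`l` in a bounded interval with `|π_l p - π_l p'| ≤ r` form a set of measure `O(r / |p - p'|)`.
Integrating `θ.map π_l (closedBall x r) / r` against `θ.map π_l` and then over `l` therefore gives
at most a multiple of the energy, and by Fatou the lower density of `θ.map π_l` is finite almost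
everywhere for almost every `l`. A Besicovitch covering argument turns this into
`θ.map π_l ≪ volume`. As `θ.map π_l` lives on the image `K₁ - l K₂`, that image is not null.

Frostman's lemma for an analytic set `K` is obtained from dyadic content. The content is continuous
along increasing sequences of sets, so Choquet's theorem yields a compact `C ⊆ K` of positive
content. A unit mass is then pushed down the dyadic tree so that no cell receives more than the
normalised content of its intersection with `C`, and the measure is a weak limit of the resulting
mass distributions.
-/

open Filter Topology Metric
open scoped ENNReal NNReal

/-! ### Choquet's capacitability theorem -/

theorem exists_prefix_lt_of_lt_univ {c : Set (ℕ → ℕ) → ℝ≥0∞}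
    (c_iUnion : ∀ E : ℕ → Set (ℕ → ℕ), Monotone E → c (⋃ n, E n) ≤ ⨆ n, c (E n)) {a : ℝ≥0∞}
    (ha : a < c univ) : ∃ N : ℕ → ℕ, ∀ k, a < c {x | ∀ i < k, x i ≤ N i} := by
  have exists_bound (k : ℕ) (B : {B // a < c B}) : ∃ m : ℕ, a < c (B ∩ {x | x k ≤ m}) := by
    have iUnion_eq : ⋃ m : ℕ, B.1 ∩ {x | x k ≤ m} = B :=
      (inter_iUnion _ _).symm.trans <|
        inter_eq_left.2 fun x _ => mem_iUnion_of_mem (x k) (le_refl (x k))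
    have mono : Monotone fun m : ℕ => B.1 ∩ {x | x k ≤ m} := fun m n hmn =>
      inter_subset_inter_right _ fun x (hx : x k ≤ m) => hx.trans hmn
    exact lt_iSup_iff.1 ((iUnion_eq.symm ▸ B.2).trans_le (c_iUnion _ mono))
  choose m hm using exists_bound
  let B : ℕ → {B // a < c B} := Nat.rec ⟨univ, ha⟩ fun k B => ⟨_, hm k B⟩
  have B_eq (k : ℕ) : (B k).1 = {x | ∀ i < k, x i ≤ m i (B i)} := by
    induction k with
    | zero => simp [B]
    | succ k ih =>
      change (B k).1 ∩ _ = _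
      simp only [ih, Nat.forall_lt_succ_right]
      rfl
  exact ⟨fun k => m k (B k), fun k => B_eq k ▸ (B k).2⟩

theorem exists_prefix_subset_of_isOpen {N : ℕ → ℕ} {U : Set (ℕ → ℕ)} (hU : IsOpen U)
    (hNU : univ.pi (fun i => Iic (N i)) ⊆ U) : ∃ k, {x | ∀ i < k, x i ≤ N i} ⊆ U := by
  have exists_cylinder_subset : ∀ x ∈ U, ∃ k, PiNat.cylinder x k ⊆ U := fun x hx => by
    obtain ⟨_, ⟨y, k, rfl⟩, hxy, hyU⟩ :=
      (PiNat.isTopologicalBasis_cylinders fun _ => ℕ).exists_subset_of_mem_open hx hU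
    exact ⟨k, PiNat.mem_cylinder_iff_eq.1 hxy ▸ hyU⟩
  choose! k hk using exists_cylinder_subset
  have box_compact : IsCompact (univ.pi fun i => Iic (N i)) :=
    isCompact_univ_pi fun i => (finite_Iic (N i)).isCompact
  obtain ⟨t, htN, ht⟩ := box_compact.elim_nhds_subcover (fun x => PiNat.cylinder x (k x)) fun x _ =>
    (PiNat.isOpen_cylinder _ x _).mem_nhds (PiNat.self_mem_cylinder x _)
  refine ⟨t.sup k, fun x hx => ?_⟩
  obtain ⟨y, hyt, hy⟩ := mem_iUnion₂.1 (ht fun i _ => min_le_right (x i) (N i))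
  refine hk y (hNU (htN y hyt)) fun i hi => ?_
  exact (min_eq_left (hx i (hi.trans_le (Finset.le_sup hyt)))).symm.trans (hy i hi)

/-- Choquet's capacitability theorem for analytic sets. The upper continuity that is asked of a
capacity along decreasing compact sets is replaced by a bound on all open neighbourhoods of `C`. -/
theorem exists_isCompact_forall_isOpen_lt {X : Type*} [TopologicalSpace X] {c : Set X → ℝ≥0∞}
    (c_mono : Monotone c)
    (c_iUnion : ∀ E : ℕ → Set X, Monotone E → c (⋃ n, E n) ≤ ⨆ n, c (E n)) {A : Set X}
    (hA : AnalyticSet A) {a : ℝ≥0∞} (ha : a < c A) :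
    ∃ C ⊆ A, IsCompact C ∧ ∀ U, IsOpen U → C ⊆ U → a < c U := by
  rw [AnalyticSet] at hA
  obtain rfl | ⟨f, f_cont, rfl⟩ := hA
  · exact ⟨∅, Subset.rfl, isCompact_empty, fun U _ hU => ha.trans_le (c_mono hU)⟩
  obtain ⟨N, hN⟩ := exists_prefix_lt_of_lt_univ (c := fun B => c (f '' B))
    (fun E hE => image_iUnion ▸ c_iUnion _ fun _ _ h => image_mono (hE h)) (image_univ ▸ ha)
  refine ⟨f '' univ.pi fun i => Iic (N i), image_subset_range _ _,
    (isCompact_univ_pi fun i => (finite_Iic (N i)).isCompact).image f_cont, fun U hU hCU => ?_⟩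
  obtain ⟨k, hk⟩ := exists_prefix_subset_of_isOpen (hU.preimage f_cont) (image_subset_iff.1 hCU)
  exact (hN k).trans_le (c_mono (image_subset_iff.2 hk))

/-! ### Dyadic cells and dyadic content -/

theorem ofReal_two_inv_pow (n : ℕ) : ENNReal.ofReal (2⁻¹ ^ n) = 2⁻¹ ^ n := by
  rw [ENNReal.ofReal_pow (by positivity), ENNReal.ofReal_inv_of_pos two_pos, ENNReal.ofReal_ofNat]

/-- The half-open dyadic interval `[k / 2ⁿ, (k + 1) / 2ⁿ)` with `p = (n, k)`: it has generation
`n` and index `k`. Only the scales `n ≥ 0` are needed, as dimension is about small scales. -/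
def dyadicCell (p : ℕ × ℤ) : Set ℝ := {x | ⌊(2 : ℝ) ^ p.1 * x⌋ = p.2}

section DyadicCell

variable {p r : ℕ × ℤ} {x y : ℝ} {n : ℕ} {k : ℤ}

theorem mem_dyadicCell : x ∈ dyadicCell p ↔ ⌊(2 : ℝ) ^ p.1 * x⌋ = p.2 := .rfl

theorem mem_dyadicCell_floor (n : ℕ) (x : ℝ) : x ∈ dyadicCell (n, ⌊(2 : ℝ) ^ n * x⌋) := rfl

theorem dyadicCell_eq_Ico (p : ℕ × ℤ) :
    dyadicCell p = Ico ((p.2 : ℝ) / 2 ^ p.1) ((p.2 + 1 : ℝ) / 2 ^ p.1) := by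
  ext x
  have two_pow_pos : (0 : ℝ) < 2 ^ p.1 := by positivity
  rw [mem_dyadicCell, Int.floor_eq_iff, mem_Ico, div_le_iff₀ two_pow_pos, lt_div_iff₀ two_pow_pos,
    mul_comm]

theorem measurableSet_dyadicCell (p : ℕ × ℤ) : MeasurableSet (dyadicCell p) :=
  dyadicCell_eq_Ico p ▸ measurableSet_Ico

theorem volume_dyadicCell (p : ℕ × ℤ) : volume (dyadicCell p) = 2⁻¹ ^ p.1 := by
  rw [dyadicCell_eq_Ico, Real.volume_Ico, ← sub_div, add_sub_cancel_left, one_div, ← inv_pow,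
    ofReal_two_inv_pow]

theorem ediam_dyadicCell (p : ℕ × ℤ) : ediam (dyadicCell p) = 2⁻¹ ^ p.1 := by
  rw [← volume_dyadicCell, dyadicCell_eq_Ico, Real.ediam_Ico, Real.volume_Ico]

theorem dyadicCell_nonempty (p : ℕ × ℤ) : (dyadicCell p).Nonempty :=
  nonempty_of_measure_ne_zero (μ := volume) (by simp [volume_dyadicCell])

theorem floor_two_pow_mul (n : ℕ) (x : ℝ) : ⌊(2 : ℝ) ^ n * x⌋ = ⌊(2 : ℝ) ^ (n + 1) * x⌋ / 2 := by
  have halve : (2 : ℝ) ^ n * x = (2 : ℝ) ^ (n + 1) * x / (2 : ℕ) := by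
    push_cast
    ring
  rw [halve, Int.floor_div_natCast, Nat.cast_ofNat]

theorem dyadicCell_succ_union (n : ℕ) (k : ℤ) :
    dyadicCell (n + 1, 2 * k) ∪ dyadicCell (n + 1, 2 * k + 1) = dyadicCell (n, k) := by
  ext x
  simp only [mem_union, mem_dyadicCell, floor_two_pow_mul n]
  lia

theorem pairwise_disjoint_dyadicCell (n : ℕ) :
    Pairwise (Function.onFun Disjoint fun k => dyadicCell (n, k)) :=
  fun _ _ hij => disjoint_left.2 fun _ hi hj => hij (hi.symm.trans hj)

theorem iUnion_dyadicCell (n : ℕ) : ⋃ k, dyadicCell (n, k) = univ :=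
  iUnion_eq_univ_iff.2 fun x => ⟨_, mem_dyadicCell_floor n x⟩

theorem dyadicCell_subset_of_le (h : r.1 ≤ p.1) (hp : x ∈ dyadicCell p) (hr : x ∈ dyadicCell r) :
    dyadicCell p ⊆ dyadicCell r := by
  have floor_eq {n : ℕ} (h : r.1 ≤ n) {y : ℝ} (hy : ⌊(2 : ℝ) ^ n * y⌋ = ⌊(2 : ℝ) ^ n * x⌋) :
      ⌊(2 : ℝ) ^ r.1 * y⌋ = ⌊(2 : ℝ) ^ r.1 * x⌋ := by
    induction n, h using Nat.le_induction with
    | base => exact hy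
    | succ n _ ih => exact ih (by rw [floor_two_pow_mul n y, floor_two_pow_mul n x, hy])
  exact fun y hy => (floor_eq h (hy.trans hp.symm)).trans hr

theorem generation_le_of_dyadicCell_subset (h : dyadicCell p ⊆ dyadicCell r) : r.1 ≤ p.1 := by
  have volume_le := measure_mono (μ := volume) h
  rw [volume_dyadicCell, volume_dyadicCell, ← ENNReal.inv_pow, ← ENNReal.inv_pow,
    ENNReal.inv_le_inv] at volume_le
  exact (Nat.pow_le_pow_iff_right one_lt_two).1 (by exact_mod_cast volume_le)

theorem eq_of_mem_dyadicCell (h : p.1 = r.1) (hp : x ∈ dyadicCell p) (hr : x ∈ dyadicCell r) :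
    p = r :=
  Prod.ext h (by rw [← mem_dyadicCell.1 hp, ← mem_dyadicCell.1 hr, h])

theorem dyadicCell_injective : Function.Injective dyadicCell := fun p r h => by
  obtain ⟨x, hx⟩ := dyadicCell_nonempty p
  exact eq_of_mem_dyadicCell ((generation_le_of_dyadicCell_subset h.ge).antisymm
    (generation_le_of_dyadicCell_subset h.le)) hx (h ▸ hx)

end DyadicCell

/-- The set function on families of dyadic cells charging `qⁿ` for each cell of generation `n`. For
`q = 2⁻ˢ` this is the sum of the `s`-th powers of the lengths of the cells. -/
noncomputable def dyadicCost (q : ℝ≥0∞) : Measure (ℕ × ℤ) :=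
  Measure.count.withDensity fun p => q ^ p.1

theorem dyadicCost_eq_tsum (q : ℝ≥0∞) (S : Set (ℕ × ℤ)) : dyadicCost q S = ∑' p : S, q ^ p.1.1 := by
  rw [dyadicCost, withDensity_apply _ .of_discrete, lintegral_countable _ S.to_countable]
  simp only [Measure.count_singleton, mul_one]

theorem dyadicCost_singleton (q : ℝ≥0∞) (p : ℕ × ℤ) : dyadicCost q {p} = q ^ p.1 := by
  rw [dyadicCost_eq_tsum, tsum_singleton p fun p => q ^ p.1]

/-- The dyadic analogue of Hausdorff content: the least cost of covering a set by dyadic cells. -/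
noncomputable def dyadicContent (q : ℝ≥0∞) (E : Set ℝ) : ℝ≥0∞ :=
  ⨅ (S : Set (ℕ × ℤ)) (_ : E ⊆ ⋃ p ∈ S, dyadicCell p), dyadicCost q S

/-- The members of a family of dyadic cells that are not properly contained in another member. -/
def maximalCells (Z : Set (ℕ × ℤ)) : Set (ℕ × ℤ) := {r | MaximalFor (· ∈ Z) dyadicCell r}

theorem maximalCells_subset (Z : Set (ℕ × ℤ)) : maximalCells Z ⊆ Z := fun _ hr => hr.1

theorem eq_of_mem_maximalCells {Z : Set (ℕ × ℤ)} {p r : ℕ × ℤ} (hr : r ∈ maximalCells Z)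
    (hp : p ∈ Z) (hrp : dyadicCell r ⊆ dyadicCell p) : r = p :=
  dyadicCell_injective (hrp.antisymm (hr.2 hp hrp))

theorem exists_mem_maximalCells {Z : Set (ℕ × ℤ)} {p : ℕ × ℤ} (hp : p ∈ Z) :
    ∃ r ∈ maximalCells Z, dyadicCell p ⊆ dyadicCell r := by
  obtain ⟨r, ⟨hr, hpr⟩, r_min⟩ := WellFounded.has_min (measure Prod.fst).wf
    {r ∈ Z | dyadicCell p ⊆ dyadicCell r} ⟨p, hp, Subset.rfl⟩
  obtain ⟨x, hx⟩ := dyadicCell_nonempty p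
  exact ⟨r, ⟨hr, fun r' hr' hrr' => dyadicCell_subset_of_le
    (not_lt.1 (r_min r' ⟨hr', hpr.trans hrr'⟩)) (hrr' (hpr hx)) (hpr hx)⟩, hpr⟩

theorem iUnion_maximalCells (Z : Set (ℕ × ℤ)) :
    ⋃ p ∈ maximalCells Z, dyadicCell p = ⋃ p ∈ Z, dyadicCell p := by
  refine (biUnion_subset_biUnion_left (maximalCells_subset Z)).antisymm <|
    iUnion₂_subset fun p hp => ?_
  obtain ⟨r, hr, hpr⟩ := exists_mem_maximalCells hp
  exact hpr.trans (subset_biUnion_of_mem (u := dyadicCell) hr)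

section DyadicContent

variable {q : ℝ≥0∞} {E F : Set ℝ} {S : Set (ℕ × ℤ)}

theorem dyadicContent_le (h : E ⊆ ⋃ p ∈ S, dyadicCell p) : dyadicContent q E ≤ dyadicCost q S :=
  iInf₂_le S h

theorem dyadicContent_mono (h : E ⊆ F) : dyadicContent q E ≤ dyadicContent q F :=
  le_iInf₂ fun _ hS => dyadicContent_le (h.trans hS)

theorem dyadicContent_inter_dyadicCell_le (E : Set ℝ) (p : ℕ × ℤ) :
    dyadicContent q (E ∩ dyadicCell p) ≤ q ^ p.1 :=
  (dyadicContent_le (by simp)).trans_eq (dyadicCost_singleton q p)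

theorem dyadicContent_union_le (A B : Set ℝ) :
    dyadicContent q (A ∪ B) ≤ dyadicContent q A + dyadicContent q B := by
  conv_rhs => simp only [dyadicContent, ENNReal.iInf_add, ENNReal.add_iInf]
  refine le_iInf₂ fun T hT => le_iInf₂ fun S hS => (dyadicContent_le (S := S ∪ T) ?_).trans
    (measure_union_le S T)
  exact biUnion_union S T _ ▸ union_subset_union hS hT

theorem exists_dyadicCost_lt {a : ℝ≥0∞} (h : dyadicContent q E < a) :
    ∃ S : Set (ℕ × ℤ), E ⊆ ⋃ p ∈ S, dyadicCell p ∧ dyadicCost q S < a := by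
  simpa only [dyadicContent, iInf_lt_iff, exists_prop] using h

/- The cells of `S ∪ T` that are not maximal, together with those in `S ∩ T`, still cover `A ∩ B`:
they contain the smaller of the two cells around each point. -/
theorem dyadicCost_maximalCells_union_add_le {A B : Set ℝ} {S T : Set (ℕ × ℤ)}
    (hS : A ⊆ ⋃ p ∈ S, dyadicCell p) (hT : B ⊆ ⋃ p ∈ T, dyadicCell p) :
    dyadicCost q (maximalCells (S ∪ T)) + dyadicContent q (A ∩ B) ≤
      dyadicCost q S + dyadicCost q T := by
  set M := maximalCells (S ∪ T)
  have inter_le : dyadicContent q (A ∩ B) ≤ dyadicCost q ((S ∪ T) \ M ∪ S ∩ T) := by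
    refine dyadicContent_le fun x ⟨hxA, hxB⟩ => ?_
    obtain ⟨p, hp, hxp⟩ := mem_iUnion₂.1 (hS hxA)
    obtain ⟨r, hr, hxr⟩ := mem_iUnion₂.1 (hT hxB)
    rcases le_total p.1 r.1 with h | h
    · refine mem_iUnion₂.2 ⟨r, or_iff_not_imp_left.2 fun hrM => ?_, hxr⟩
      have r_eq : r = p := eq_of_mem_maximalCells (not_not.1 fun hr' => hrM ⟨.inr hr, hr'⟩)
        (.inl hp) (dyadicCell_subset_of_le h hxr hxp)
      exact ⟨r_eq ▸ hp, hr⟩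
    · refine mem_iUnion₂.2 ⟨p, or_iff_not_imp_left.2 fun hpM => ?_, hxp⟩
      have p_eq : p = r := eq_of_mem_maximalCells (not_not.1 fun hp' => hpM ⟨.inl hp, hp'⟩)
        (.inr hr) (dyadicCell_subset_of_le h hxp hxr)
      exact ⟨hp, p_eq ▸ hr⟩
  calc
    dyadicCost q M + dyadicContent q (A ∩ B)
      ≤ dyadicCost q M + (dyadicCost q ((S ∪ T) \ M) + dyadicCost q (S ∩ T)) := by
        gcongr
        exact inter_le.trans (measure_union_le _ _)
    _ = dyadicCost q (S ∪ T) + dyadicCost q (S ∩ T) := by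
        rw [← add_assoc, measure_add_sdiff MeasurableSet.of_discrete.nullMeasurableSet,
          union_eq_self_of_subset_left (maximalCells_subset _)]
    _ = dyadicCost q S + dyadicCost q T := measure_union_add_inter _ .of_discrete

theorem maximalCells_maximalCells_union (S T : Set (ℕ × ℤ)) :
    maximalCells (maximalCells S ∪ T) = maximalCells (S ∪ T) := by
  have sub : maximalCells S ∪ T ⊆ S ∪ T := union_subset_union_left T (maximalCells_subset S)
  have exists_above : ∀ r ∈ S ∪ T, ∃ p ∈ maximalCells S ∪ T, dyadicCell r ⊆ dyadicCell p := by
    rintro r (hr | hr)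
    · obtain ⟨p, hp, hrp⟩ := exists_mem_maximalCells hr
      exact ⟨p, .inl hp, hrp⟩
    · exact ⟨r, .inr hr, Subset.rfl⟩
  ext r
  constructor <;> intro hr
  · refine ⟨sub hr.1, fun p hp hrp => ?_⟩
    obtain ⟨p', hp', hpp'⟩ := exists_above p hp
    exact hpp'.trans (hr.2 hp' (hrp.trans hpp'))
  · obtain ⟨p, hp, hrp⟩ := exists_above r hr.1
    exact ⟨eq_of_mem_maximalCells hr (sub hp) hrp ▸ hp, fun p hp => hr.2 (sub hp)⟩

theorem dyadicCost_maximalCells_iUnion_le (T : ℕ → Set (ℕ × ℤ)) :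
    dyadicCost q (maximalCells (⋃ n, T n)) ≤
      ⨆ n, dyadicCost q (maximalCells (accumulate T n)) := by
  set Z := maximalCells (⋃ n, T n)
  have Z_eq : Z = ⋃ n, Z ∩ accumulate T n := by
    rw [← inter_iUnion, iUnion_accumulate, inter_eq_self_of_subset_left (maximalCells_subset _)]
  have Z_inter_subset (n : ℕ) : Z ∩ accumulate T n ⊆ maximalCells (accumulate T n) :=
    fun r hr => ⟨hr.2, fun p hp => hr.1.2 (iUnion_accumulate (s := T) ▸ mem_iUnion_of_mem n hp)⟩
  rw [Z_eq, Monotone.measure_iUnion fun m n h => inter_subset_inter_right Z (monotone_accumulate h)]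
  exact iSup_mono fun n => measure_mono (Z_inter_subset n)

theorem dyadicCost_maximalCells_accumulate_le {E : ℕ → Set ℝ} (hE : Monotone E)
    (E_ne_top : ∀ n, dyadicContent q (E n) ≠ ∞) {T : ℕ → Set (ℕ × ℤ)} {δ : ℕ → ℝ≥0∞}
    (hT : ∀ n, E n ⊆ ⋃ p ∈ T n, dyadicCell p)
    (T_le : ∀ n, dyadicCost q (T n) ≤ dyadicContent q (E n) + δ n) (n : ℕ) :
    dyadicCost q (maximalCells (accumulate T n)) ≤
      dyadicContent q (E n) + ∑ i ∈ Finset.range (n + 1), δ i := by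
  induction n with
  | zero =>
    simpa only [accumulate_zero_nat, zero_add, Finset.sum_range_one] using
      (measure_mono (maximalCells_subset _)).trans (T_le 0)
  | succ n ih =>
    have cover : E n ⊆ ⋃ p ∈ maximalCells (accumulate T n), dyadicCell p := by
      rw [iUnion_maximalCells]
      exact (hT n).trans (biUnion_subset_biUnion_left (subset_accumulate (s := T)))
    have union_add_le := dyadicCost_maximalCells_union_add_le (q := q) cover (hT (n + 1))
    rw [maximalCells_maximalCells_union, ← accumulate_succ,
      inter_eq_self_of_subset_left (hE n.le_succ)] at union_add_le
    refine (ENNReal.add_le_add_iff_right (E_ne_top n)).1 ?_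
    calc
      _ ≤ _ := union_add_le
      _ ≤ (dyadicContent q (E n) + ∑ i ∈ Finset.range (n + 1), δ i) +
          (dyadicContent q (E (n + 1)) + δ (n + 1)) := add_le_add ih (T_le (n + 1))
      _ = _ := by
        rw [Finset.sum_range_succ _ (n + 1)]
        ring

theorem dyadicContent_iUnion_le {E : ℕ → Set ℝ} (hE : Monotone E) :
    dyadicContent q (⋃ n, E n) ≤ ⨆ n, dyadicContent q (E n) := by
  refine ENNReal.le_of_forall_pos_le_add fun ε hε iSup_lt_top => ?_
  have E_ne_top (n : ℕ) : dyadicContent q (E n) ≠ ∞ :=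
    ((le_iSup (fun n => dyadicContent q (E n)) n).trans_lt iSup_lt_top).ne
  obtain ⟨δ, δ_pos, sum_δ⟩ := ENNReal.exists_pos_sum_of_countable
    (ENNReal.coe_ne_zero.2 hε.ne') ℕ
  choose T hT T_lt using fun n => exists_dyadicCost_lt
    (ENNReal.lt_add_right (E_ne_top n) (ENNReal.coe_ne_zero.2 (δ_pos n).ne'))
  have cover : ⋃ n, E n ⊆ ⋃ p ∈ maximalCells (⋃ n, T n), dyadicCell p := by
    rw [iUnion_maximalCells]
    exact iUnion_subset fun n =>
      (hT n).trans (biUnion_subset_biUnion_left (subset_iUnion T n))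
  calc
    dyadicContent q (⋃ n, E n)
      ≤ ⨆ n, dyadicCost q (maximalCells (accumulate T n)) :=
        (dyadicContent_le cover).trans (dyadicCost_maximalCells_iUnion_le T)
    _ ≤ ⨆ n, (dyadicContent q (E n) + ε) := by
        refine iSup_mono fun n => (dyadicCost_maximalCells_accumulate_le hE E_ne_top hT
          (fun n => (T_lt n).le) n).trans ?_
        gcongr
        exact (ENNReal.sum_le_tsum _).trans sum_δ.le
    _ = (⨆ n, dyadicContent q (E n)) + ε := (ENNReal.iSup_add _).symm

theorem closedBall_subset_biUnion_dyadicCell (n : ℕ) (x : ℝ) :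
    closedBall x (2⁻¹ ^ n) ⊆
      ⋃ k ∈ Finset.Icc (⌊(2 : ℝ) ^ n * x⌋ - 1) (⌊(2 : ℝ) ^ n * x⌋ + 1), dyadicCell (n, k) := by
  intro y hy
  have scaled : |(2 : ℝ) ^ n * y - 2 ^ n * x| ≤ 1 := by
    calc
      |(2 : ℝ) ^ n * y - 2 ^ n * x| = 2 ^ n * |y - x| := by
        rw [← mul_sub, abs_mul, abs_of_pos (by positivity)]
      _ ≤ 2 ^ n * 2⁻¹ ^ n := by gcongr; exact hy
      _ = 1 := by rw [← mul_pow, mul_inv_cancel₀ two_ne_zero, one_pow]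
  obtain ⟨lower, upper⟩ := abs_le.1 scaled
  refine mem_iUnion₂.2 ⟨_, Finset.mem_Icc.2 ⟨?_, ?_⟩, mem_dyadicCell_floor n y⟩
  · rw [← Int.floor_sub_one]
    exact Int.floor_le_floor (by linarith)
  · rw [← Int.floor_add_one]
    exact Int.floor_le_floor (by linarith)

theorem dyadicCost_image_Icc_le (q : ℝ≥0∞) (p : ℕ × ℤ) :
    dyadicCost q ((p.1, ·) '' Icc (p.2 - 1) (p.2 + 1)) ≤ 3 * q ^ p.1 := by
  calc
    dyadicCost q ((p.1, ·) '' Icc (p.2 - 1) (p.2 + 1))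
      ≤ ∑ k ∈ Finset.Icc (p.2 - 1) (p.2 + 1), dyadicCost q {(p.1, k)} := by
        rw [image_eq_iUnion, ← Finset.coe_Icc]
        exact measure_biUnion_finset_le _ _
    _ = 3 * q ^ p.1 := by
        simp only [dyadicCost_singleton, Finset.sum_const, Int.card_Icc, nsmul_eq_mul]
        congr 1
        norm_cast
        lia

theorem exists_isOpen_dyadicContent_le {a : ℝ≥0∞} (h : dyadicContent q E < a) :
    ∃ U, IsOpen U ∧ E ⊆ U ∧ dyadicContent q U ≤ 3 * a := by
  obtain ⟨S, hES, S_lt⟩ := exists_dyadicCost_lt h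
  refine ⟨⋃ p ∈ S, thickening (2⁻¹ ^ p.1) (dyadicCell p),
    isOpen_biUnion fun _ _ => isOpen_thickening,
    hES.trans (iUnion₂_mono fun p _ => self_subset_thickening (by positivity) _), ?_⟩
  have cover : ⋃ p ∈ S, thickening (2⁻¹ ^ p.1) (dyadicCell p) ⊆
      ⋃ p ∈ ⋃ p : S, (p.1.1, ·) '' Icc (p.1.2 - 1) (p.1.2 + 1), dyadicCell p := by
    refine iUnion₂_subset fun p hp y hy => ?_
    obtain ⟨x, hx, hyx⟩ := mem_thickening_iff.1 hy
    obtain ⟨k, hk, hyk⟩ := mem_iUnion₂.1 (closedBall_subset_biUnion_dyadicCell p.1 x hyx.le)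
    rw [mem_dyadicCell.1 hx, Finset.mem_Icc] at hk
    exact mem_iUnion₂.2 ⟨(p.1, k), mem_iUnion.2 ⟨⟨p, hp⟩, k, hk, rfl⟩, hyk⟩
  calc
    dyadicContent q (⋃ p ∈ S, thickening (2⁻¹ ^ p.1) (dyadicCell p))
      ≤ ∑' p : S, dyadicCost q ((p.1.1, ·) '' Icc (p.1.2 - 1) (p.1.2 + 1)) :=
        (dyadicContent_le cover).trans (measure_iUnion_le _)
    _ ≤ ∑' p : S, 3 * q ^ p.1.1 := ENNReal.tsum_le_tsum fun p => dyadicCost_image_Icc_le q p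
    _ = 3 * dyadicCost q S := by rw [ENNReal.tsum_mul_left, dyadicCost_eq_tsum]
    _ ≤ 3 * a := by gcongr

theorem exists_isCompact_dyadicContent_ne_zero {K : Set ℝ} (hK : AnalyticSet K)
    (h : dyadicContent q K ≠ 0) : ∃ C ⊆ K, IsCompact C ∧ dyadicContent q C ≠ 0 := by
  obtain ⟨a, a_pos, ha⟩ := exists_between (pos_iff_ne_zero.2 h)
  obtain ⟨C, hCK, hC, lt_open⟩ := exists_isCompact_forall_isOpen_lt
    (fun _ _ => dyadicContent_mono) (fun _ => dyadicContent_iUnion_le) hK ha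
  refine ⟨C, hCK, hC, fun C_null => ?_⟩
  obtain ⟨U, hU, hCU, U_le⟩ := exists_isOpen_dyadicContent_le
    (C_null.trans_lt (ENNReal.div_pos a_pos.ne' ENNReal.ofNat_ne_top : 0 < a / 3))
  rw [ENNReal.mul_div_cancel three_ne_zero ENNReal.ofNat_ne_top] at U_le
  exact (lt_open U hU hCU).not_ge U_le

theorem hausdorffMeasure_eq_zero_of_dyadicContent_eq_zero {s : ℝ} (hs : 0 < s)
    (hE : dyadicContent (2⁻¹ ^ s) E = 0) : μH[s] E = 0 := by
  set q : ℝ≥0∞ := 2⁻¹ ^ s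
  have q_pos : 0 < q := ENNReal.rpow_pos (by simp) (by simp)
  have q_lt_one : q < 1 := ENNReal.rpow_lt_one (by simp) hs
  choose S hES S_lt using fun j : ℕ => exists_dyadicCost_lt (hE.trans_lt (ENNReal.pow_pos q_pos j))
  have ediam_le (j : ℕ) (p : S j) : ediam (dyadicCell p) ≤ 2⁻¹ ^ j := by
    rw [ediam_dyadicCell]
    have pow_lt : q ^ p.1.1 < q ^ j :=
      (dyadicCost_singleton q p ▸ measure_mono (singleton_subset_iff.2 p.2)).trans_lt (S_lt j)
    refine pow_le_pow_right_of_le_one' (by simp) (le_of_not_gt fun hj => pow_lt.not_ge ?_)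
    exact pow_le_pow_right_of_le_one' q_lt_one.le hj.le
  have tsum_ediam (j : ℕ) : ∑' p : S j, ediam (dyadicCell p) ^ s = dyadicCost q (S j) := by
    simp only [dyadicCost_eq_tsum, ediam_dyadicCell, q, ← ENNReal.rpow_mul_natCast,
      ← ENNReal.rpow_natCast_mul, mul_comm]
  refine le_bot_iff.1 ?_
  calc
    μH[s] E ≤ liminf (fun j => ∑' p : S j, ediam (dyadicCell p) ^ s) atTop :=
      Measure.hausdorffMeasure_le_liminf_tsum s E (2⁻¹ ^ ·)
        (ENNReal.tendsto_pow_atTop_nhds_zero_of_lt_one (by simp)) _ (.of_forall ediam_le)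
        (.of_forall fun j => (hES j).trans_eq (biUnion_eq_iUnion _ _))
    _ ≤ liminf (q ^ ·) atTop :=
      liminf_le_liminf (.of_forall fun j => (tsum_ediam j).trans_le (S_lt j).le)
    _ = 0 := (ENNReal.tendsto_pow_atTop_nhds_zero_of_lt_one q_lt_one).liminf_eq

end DyadicContent

/-! ### Frostman's lemma -/

section DyadicFlow

/-- Splits the mass `m 0 k` of each unit cell along the binary tree of dyadic cells: the left child
of a cell receives as much as its capacity `m` permits, the right child receives the rest. -/
noncomputable def dyadicFlow (m : ℕ → ℤ → ℝ≥0∞) : ℕ → ℤ → ℝ≥0∞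
  | 0, k => m 0 k
  | n + 1, k =>
    if Even k then min (dyadicFlow m n (k / 2)) (m (n + 1) k)
    else dyadicFlow m n (k / 2) - m (n + 1) (k - 1)

variable {m f : ℕ → ℤ → ℝ≥0∞}

theorem dyadicFlow_succ_two_mul (m : ℕ → ℤ → ℝ≥0∞) (n : ℕ) (k : ℤ) :
    dyadicFlow m (n + 1) (2 * k) = min (dyadicFlow m n k) (m (n + 1) (2 * k)) := by
  rw [dyadicFlow, if_pos (even_two_mul k), Int.mul_ediv_cancel_left k two_ne_zero]

theorem dyadicFlow_succ_two_mul_add_one (m : ℕ → ℤ → ℝ≥0∞) (n : ℕ) (k : ℤ) :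
    dyadicFlow m (n + 1) (2 * k + 1) = dyadicFlow m n k - m (n + 1) (2 * k) := by
  have half : (2 * k + 1) / 2 = k := by lia
  rw [dyadicFlow, if_neg (Int.not_even_two_mul_add_one k), half, add_sub_cancel_right]

theorem dyadicFlow_succ_add (m : ℕ → ℤ → ℝ≥0∞) (n : ℕ) (k : ℤ) :
    dyadicFlow m (n + 1) (2 * k) + dyadicFlow m (n + 1) (2 * k + 1) = dyadicFlow m n k := by
  rw [dyadicFlow_succ_two_mul, dyadicFlow_succ_two_mul_add_one, add_comm, tsub_add_min]

theorem dyadicFlow_le (hm : ∀ n k, m n k ≤ m (n + 1) (2 * k) + m (n + 1) (2 * k + 1)) (n : ℕ)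
    (k : ℤ) : dyadicFlow m n k ≤ m n k := by
  induction n generalizing k with
  | zero => exact le_rfl
  | succ n ih =>
    obtain ⟨l, rfl | rfl⟩ := Int.even_or_odd' k
    · exact dyadicFlow_succ_two_mul m n l ▸ min_le_right _ _
    · exact dyadicFlow_succ_two_mul_add_one m n l ▸ tsub_le_iff_left.2 ((ih l).trans (hm n l))

theorem measure_dyadicCell_eq_of_le (hf : ∀ n k, f (n + 1) (2 * k) + f (n + 1) (2 * k + 1) = f n k)
    {ν : Measure ℝ} {i n : ℕ} (hin : i ≤ n) (hν : ∀ k, ν (dyadicCell (n, k)) = f n k) (k : ℤ) :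
    ν (dyadicCell (i, k)) = f i k := by
  induction n, hin using Nat.le_induction with
  | base => exact hν k
  | succ n _ ih =>
    refine ih fun l => ?_
    rw [← dyadicCell_succ_union, measure_union _ (measurableSet_dyadicCell _), hν, hν, hf]
    exact pairwise_disjoint_dyadicCell (n + 1) (by lia)

theorem exists_measure_dyadicCell_eq
    (hf : ∀ n k, f (n + 1) (2 * k) + f (n + 1) (2 * k + 1) = f n k) (n : ℕ) :
    ∃ ν : Measure ℝ, ∀ i ≤ n, ∀ k, ν (dyadicCell (i, k)) = f i k := by
  refine ⟨volume.withDensity fun x => 2 ^ n * f n ⌊(2 : ℝ) ^ n * x⌋, fun i hin k =>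
    measure_dyadicCell_eq_of_le hf hin (fun l => ?_) k⟩
  have density_const : ∀ x ∈ dyadicCell (n, l), 2 ^ n * f n ⌊(2 : ℝ) ^ n * x⌋ = 2 ^ n * f n l :=
    fun x hx => by rw [mem_dyadicCell.1 hx]
  rw [withDensity_apply _ (measurableSet_dyadicCell _),
    setLIntegral_congr_fun (measurableSet_dyadicCell _) density_const, setLIntegral_const,
    volume_dyadicCell, mul_comm, ← mul_assoc, ← mul_pow,
    ENNReal.inv_mul_cancel two_ne_zero ENNReal.ofNat_ne_top, one_pow, one_mul]

theorem exists_probabilityMeasure_forall_isOpen_le {X : Type*} [TopologicalSpace X] [T2Space X]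
    [MeasurableSpace X] [BorelSpace X] [HasOuterApproxClosed X] {P : ℕ → ProbabilityMeasure X}
    {K : Set X} (hK : IsCompact K) (hP : ∀ n, (P n : Measure X) Kᶜ = 0) :
    ∃ μ : ProbabilityMeasure X, ∀ U, IsOpen U → ∀ b : ℝ≥0∞,
      (∀ᶠ n in atTop, (P n : Measure X) U ≤ b) → (μ : Measure X) U ≤ b := by
  have compact := isCompact_setOfPred_probabilityMeasure_mass_eq_compl_isCompact_le
    (E := X) (u := 0) (K := fun _ => K) tendsto_const_nhds (fun _ => hK) (.inr monotone_const)
  have P_mem (n : ℕ) : P n ∈ {μ : ProbabilityMeasure X | ∀ _ : ℕ, μ Kᶜ ≤ 0} :=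
    fun _ => ((P n).null_iff_toMeasure_null _).2 (hP n) |>.le
  obtain ⟨μ, -, hμ⟩ := compact.ultrafilter_le_nhds' ((hyperfilter ℕ).map P)
    (univ_mem' (f := hyperfilter ℕ) P_mem)
  have P_tendsto : Tendsto P (hyperfilter ℕ) (𝓝 μ) := hμ
  refine ⟨μ, fun U hU b hb => (ProbabilityMeasure.le_liminf_measure_open_of_tendsto
    P_tendsto hU).trans (liminf_le_of_frequently_le' ?_)⟩
  exact (hb.filter_mono Nat.hyperfilter_le_atTop).frequently

theorem exists_isProbabilityMeasure_le_sum
    (hf : ∀ n k, f (n + 1) (2 * k) + f (n + 1) (2 * k + 1) = f n k) {k₀ : ℤ} (hk₀ : f 0 k₀ = 1) :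
    ∃ μ : Measure ℝ, IsProbabilityMeasure μ ∧ ∀ U, IsOpen U → ∀ n, ∀ F : Finset ℤ,
      U ⊆ ⋃ k ∈ F, dyadicCell (n, k) → μ U ≤ ∑ k ∈ F, f n k := by
  choose ν hν using exists_measure_dyadicCell_eq hf
  let P (n : ℕ) : ProbabilityMeasure ℝ := ⟨(ν n).restrict (dyadicCell (0, k₀)),
    ⟨by rw [Measure.restrict_apply_univ, hν n 0 n.zero_le, hk₀]⟩⟩
  have cell_subset : dyadicCell (0, k₀) ⊆ Icc k₀ (k₀ + 1) := by
    rw [dyadicCell_eq_Ico]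
    simpa only [pow_zero, div_one] using Ico_subset_Icc_self
  have P_compl (n : ℕ) : (P n : Measure ℝ) (Icc (k₀ : ℝ) (k₀ + 1))ᶜ = 0 :=
    (Measure.restrict_apply_eq_zero measurableSet_Icc.compl).2 <| by
      rw [(disjoint_compl_left_iff_subset.2 cell_subset).inter_eq, measure_empty]
  obtain ⟨μ, hμ⟩ := exists_probabilityMeasure_forall_isOpen_le isCompact_Icc P_compl
  refine ⟨μ, μ.2, fun U hU n F hUF => hμ U hU _ ?_⟩
  filter_upwards [eventually_ge_atTop n] with N hN
  calc
    (P N : Measure ℝ) U ≤ ν N (⋃ k ∈ F, dyadicCell (n, k)) :=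
      (Measure.restrict_apply_le _ _).trans (measure_mono hUF)
    _ ≤ ∑ k ∈ F, ν N (dyadicCell (n, k)) := measure_biUnion_finset_le _ _
    _ = ∑ k ∈ F, f n k := Finset.sum_congr rfl fun k _ => hν N n hN k

end DyadicFlow

/-- The growth condition `μ (closedBall x r) ≤ A r ^ s` of Frostman's lemma, expressing that `μ` is
at least `s`-dimensional uniformly over all balls. -/
def IsFrostman {X : Type*} [PseudoMetricSpace X] [MeasurableSpace X] (μ : Measure X)
    (s : ℝ) : Prop :=
  ∃ A : ℝ≥0, ∀ x, ∀ r > 0, μ (closedBall x r) ≤ A * ENNReal.ofReal r ^ s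

theorem IsFrostman.prod {X Y : Type*} [PseudoMetricSpace X] [MeasurableSpace X]
    [PseudoMetricSpace Y] [MeasurableSpace Y] {μ : Measure X} {ν : Measure Y} [SFinite ν] {s t : ℝ}
    (hμ : IsFrostman μ s) (hν : IsFrostman ν t) (hs : 0 ≤ s) (ht : 0 ≤ t) :
    IsFrostman (μ.prod ν) (s + t) := by
  obtain ⟨A, hA⟩ := hμ
  obtain ⟨B, hB⟩ := hν
  refine ⟨A * B, fun z r hr => ?_⟩
  calc
    μ.prod ν (closedBall z r) = μ (closedBall z.1 r) * ν (closedBall z.2 r) := by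
      rw [← Measure.prod_prod, closedBall_prod_same]
    _ ≤ (A * ENNReal.ofReal r ^ s) * (B * ENNReal.ofReal r ^ t) := by
      gcongr
      exacts [hA _ r hr, hB _ r hr]
    _ = (A * B : ℝ≥0) * ENNReal.ofReal r ^ (s + t) := by
      rw [ENNReal.rpow_add_of_nonneg _ _ hs ht, ENNReal.coe_mul, mul_mul_mul_comm]

theorem dyadicCell_subset_closedBall {n : ℕ} {k : ℤ} {x : ℝ}
    (hk : k ∈ Finset.Icc (⌊(2 : ℝ) ^ n * x⌋ - 1) (⌊(2 : ℝ) ^ n * x⌋ + 1)) :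
    dyadicCell (n, k) ⊆ closedBall x (2 * 2⁻¹ ^ n) := by
  intro y hy
  obtain rfl : ⌊(2 : ℝ) ^ n * y⌋ = k := hy
  obtain ⟨lower, upper⟩ := Finset.mem_Icc.1 hk
  have lower' : (⌊(2 : ℝ) ^ n * x⌋ : ℝ) - 1 ≤ ⌊(2 : ℝ) ^ n * y⌋ := by exact_mod_cast lower
  have upper' : (⌊(2 : ℝ) ^ n * y⌋ : ℝ) ≤ ⌊(2 : ℝ) ^ n * x⌋ + 1 := by exact_mod_cast upper
  have scaled : |(2 : ℝ) ^ n * (y - x)| ≤ 2 := by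
    rw [mul_sub, abs_le]
    constructor <;> linarith [Int.floor_le ((2 : ℝ) ^ n * x), Int.floor_le ((2 : ℝ) ^ n * y),
      Int.lt_floor_add_one ((2 : ℝ) ^ n * x), Int.lt_floor_add_one ((2 : ℝ) ^ n * y)]
  rw [abs_mul, abs_of_pos (by positivity)] at scaled
  rw [mem_closedBall, Real.dist_eq, inv_pow, ← div_eq_mul_inv, le_div_iff₀' (by positivity)]
  exact scaled

theorem exists_isProbabilityMeasure_le_sum_dyadicContent {q : ℝ≥0∞} {C : Set ℝ} {k₀ : ℤ}
    (hCk₀ : C ⊆ dyadicCell (0, k₀)) (hC : dyadicContent q C ≠ 0) :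
    ∃ μ : Measure ℝ, IsProbabilityMeasure μ ∧ ∀ U, IsOpen U → ∀ n, ∀ F : Finset ℤ,
      U ⊆ ⋃ k ∈ F, dyadicCell (n, k) →
        μ U ≤ ∑ k ∈ F, dyadicContent q (C ∩ dyadicCell (n, k)) / dyadicContent q C := by
  have C_inter : C ∩ dyadicCell (0, k₀) = C := inter_eq_left.2 hCk₀
  have content_ne_top : dyadicContent q C ≠ ∞ := C_inter ▸
    ne_top_of_le_ne_top (pow_zero q ▸ ENNReal.one_ne_top) (dyadicContent_inter_dyadicCell_le C _)
  set m : ℕ → ℤ → ℝ≥0∞ := fun n k => dyadicContent q (C ∩ dyadicCell (n, k)) / dyadicContent q C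
  have m_le (n : ℕ) (k : ℤ) : m n k ≤ m (n + 1) (2 * k) + m (n + 1) (2 * k + 1) := by
    simp only [m, ← ENNReal.add_div, ← dyadicCell_succ_union n k, inter_union_distrib_left]
    gcongr
    exact dyadicContent_union_le _ _
  have flow_root : dyadicFlow m 0 k₀ = 1 := by
    rw [dyadicFlow]
    simp only [m, C_inter, ENNReal.div_self hC content_ne_top]
  obtain ⟨μ, prob_μ, hμ⟩ := exists_isProbabilityMeasure_le_sum (dyadicFlow_succ_add m) flow_root
  exact ⟨μ, prob_μ, fun U hU n F hUF =>
    (hμ U hU n F hUF).trans (Finset.sum_le_sum fun k _ => dyadicFlow_le m_le n k)⟩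

theorem IsFrostman.of_measure_ball_le {X : Type*} [PseudoMetricSpace X] [MeasurableSpace X]
    {μ : Measure X} [IsFiniteMeasure μ] {s : ℝ} (hs : 0 < s) {B : ℝ≥0}
    (h : ∀ x, ∀ n : ℕ, μ (ball x (2⁻¹ ^ n)) ≤ B * (2⁻¹ ^ s) ^ n) : IsFrostman μ s := by
  refine ⟨(μ univ).toNNReal + B * 4 ^ s, fun x r hr => ?_⟩
  rw [ENNReal.coe_add, ENNReal.coe_toNNReal (measure_ne_top μ univ), add_mul]
  rcases le_or_gt 1 r with one_le | lt_one
  · refine le_add_right ((measure_mono (subset_univ _)).trans (le_mul_of_one_le_right' ?_))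
    exact ENNReal.one_le_rpow (ENNReal.one_le_ofReal.2 one_le) hs
  have lt_min : r < min 1 (2 * r) := lt_min lt_one (by linarith)
  obtain ⟨n, lt_radius, radius_le⟩ := exists_nat_pow_near_of_lt_one (hr.trans lt_min)
    (min_le_left 1 (2 * r)) (by norm_num : (0 : ℝ) < 2⁻¹) (by norm_num)
  have pow_le : (2⁻¹ : ℝ≥0∞) ^ n ≤ 4 * ENNReal.ofReal r := calc
    (2⁻¹ : ℝ≥0∞) ^ n = ENNReal.ofReal (2⁻¹ ^ n) := (ofReal_two_inv_pow n).symm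
    _ ≤ ENNReal.ofReal (4 * r) := by
      refine ENNReal.ofReal_le_ofReal ?_
      rw [pow_succ] at lt_radius
      linarith [min_le_right 1 (2 * r)]
    _ = 4 * ENNReal.ofReal r := by
      rw [ENNReal.ofReal_mul (by positivity), ENNReal.ofReal_ofNat]
  refine le_add_left ?_
  calc
    μ (closedBall x r) ≤ B * (2⁻¹ ^ s) ^ n :=
      (measure_mono (closedBall_subset_ball (lt_min.trans_le radius_le))).trans (h x n)
    _ = B * (2⁻¹ ^ n) ^ s := by
      rw [← ENNReal.rpow_mul_natCast, ← ENNReal.rpow_natCast_mul, mul_comm s]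
    _ ≤ B * (4 * ENNReal.ofReal r) ^ s := by gcongr
    _ = (B * 4 ^ s : ℝ≥0) * ENNReal.ofReal r ^ s := by
      rw [ENNReal.mul_rpow_of_nonneg _ _ hs.le, ← mul_assoc, ENNReal.coe_mul,
        ENNReal.coe_rpow_of_nonneg _ hs.le, ENNReal.coe_ofNat]

theorem exists_isFrostman_of_isClosed {C : Set ℝ} (hC : IsClosed C) {k₀ : ℤ}
    (hCk₀ : C ⊆ dyadicCell (0, k₀)) {s : ℝ} (hs : 0 < s)
    (content_ne_zero : dyadicContent (2⁻¹ ^ s) C ≠ 0) :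
    ∃ μ : Measure ℝ, IsProbabilityMeasure μ ∧ IsFrostman μ s ∧ ∀ᵐ x ∂μ, x ∈ C := by
  set q : ℝ≥0∞ := 2⁻¹ ^ s
  obtain ⟨μ, prob_μ, hμ⟩ := exists_isProbabilityMeasure_le_sum_dyadicContent hCk₀ content_ne_zero
  have ball_le (x : ℝ) (n : ℕ) := hμ (ball x (2⁻¹ ^ n)) isOpen_ball n _
    (ball_subset_closedBall.trans (closedBall_subset_biUnion_dyadicCell n x))
  have inv_content_ne_top : (dyadicContent q C)⁻¹ ≠ ∞ := ENNReal.inv_ne_top.2 content_ne_zero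
  refine ⟨μ, prob_μ, .of_measure_ball_le hs (B := 3 * (dyadicContent q C)⁻¹.toNNReal) fun x n => ?_,
    measure_null_of_locally_null _ fun x hx => ?_⟩
  · calc
      μ (ball x (2⁻¹ ^ n)) ≤ _ := ball_le x n
      _ ≤ ∑ _k ∈ Finset.Icc (⌊(2 : ℝ) ^ n * x⌋ - 1) (⌊(2 : ℝ) ^ n * x⌋ + 1),
          q ^ n * (dyadicContent q C)⁻¹ := by
        gcongr with k
        rw [div_eq_mul_inv]
        gcongr
        exact dyadicContent_inter_dyadicCell_le C (n, k)
      _ = (3 * (dyadicContent q C)⁻¹.toNNReal : ℝ≥0) * q ^ n := by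
        rw [Finset.sum_const, Int.card_Icc, ENNReal.coe_mul,
          ENNReal.coe_toNNReal inv_content_ne_top, nsmul_eq_mul, mul_comm (q ^ n), mul_assoc]
        congr 1
        norm_cast
        lia
  · obtain ⟨δ, δ_pos, hδ⟩ := nhds_basis_closedBall.mem_iff.1 (hC.isOpen_compl.mem_nhds hx)
    obtain ⟨n, hn⟩ := exists_pow_lt_of_lt_one (half_pos δ_pos) (by norm_num : (2⁻¹ : ℝ) < 1)
    refine ⟨_, mem_nhdsWithin_of_mem_nhds (ball_mem_nhds x (by positivity)),
      le_bot_iff.1 ((ball_le x n).trans_eq (Finset.sum_eq_zero fun k hk => ?_))⟩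
    have inter_eq_empty : C ∩ dyadicCell (n, k) = ∅ :=
      (subset_compl_iff_disjoint_left.1 <| (dyadicCell_subset_closedBall hk).trans <|
        (closedBall_subset_closedBall (by linarith)).trans hδ).inter_eq
    have content_empty : dyadicContent q ∅ = 0 := by
      simpa using dyadicContent_le (q := q) (S := ∅) (empty_subset _)
    rw [inter_eq_empty, content_empty, ENNReal.zero_div]

theorem analyticSet_inter {X : Type*} [TopologicalSpace X] [T2Space X] {s t : Set X}
    (hs : AnalyticSet s) (ht : AnalyticSet t) : AnalyticSet (s ∩ t) := by
  rw [inter_eq_iInter]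
  exact .iInter (Bool.forall_bool.2 ⟨ht, hs⟩)

theorem exists_isFrostman_of_lt_dimH {K : Set ℝ} (hK : AnalyticSet K) {s : ℝ} (hs : 0 < s)
    (hsK : ENNReal.ofReal s < dimH K) :
    ∃ μ : Measure ℝ, IsProbabilityMeasure μ ∧ IsFrostman μ s ∧ ∀ᵐ x ∂μ, x ∈ K := by
  have K_eq : K = ⋃ k : ℤ, K ∩ dyadicCell (0, k) := by
    rw [← inter_iUnion, iUnion_dyadicCell, inter_univ]
  rw [K_eq, dimH_iUnion] at hsK
  obtain ⟨k₀, hk₀⟩ := lt_iSup_iff.1 hsK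
  have content_ne_zero : dyadicContent (2⁻¹ ^ s) (K ∩ dyadicCell (0, k₀)) ≠ 0 := fun h => by
    have hausdorff_top := hausdorffMeasure_of_lt_dimH (d := s.toNNReal) hk₀
    rw [Real.coe_toNNReal s hs.le, hausdorffMeasure_eq_zero_of_dyadicContent_eq_zero hs h]
      at hausdorff_top
    exact ENNReal.zero_ne_top hausdorff_top
  obtain ⟨C, hCK, hC, hC0⟩ := exists_isCompact_dyadicContent_ne_zero
    (analyticSet_inter hK (measurableSet_dyadicCell _).analyticSet) content_ne_zero
  obtain ⟨μ, prob_μ, frostman_μ, hμ⟩ :=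
    exists_isFrostman_of_isClosed hC.isClosed (hCK.trans inter_subset_right) hs hC0
  exact ⟨μ, prob_μ, frostman_μ, hμ.mono fun x hx => (hCK hx).1⟩

/-! ### Riesz energy -/

/-- The Riesz `s`-energy `∬ |x - y|⁻ˢ dμ(x) dμ(y)` of a measure, whose finiteness for `s = 1` is
what makes the projections of `μ` to a line absolutely continuous. On the diagonal, `0 ^ (-s) = ∞`
for `0 < s`. -/
noncomputable def rieszEnergy {X : Type*} [PseudoEMetricSpace X] [MeasurableSpace X] (s : ℝ)
    (μ : Measure X) : ℝ≥0∞ :=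
  ∫⁻ x, ∫⁻ y, edist x y ^ (-s) ∂μ ∂μ

theorem rpow_neg_le_one_add_tsum_indicator (e : ℝ≥0∞) {s : ℝ} (hs : 0 < s) :
    e ^ (-s) ≤ 1 + ∑' n : ℕ, (2 ^ s) ^ (n + 1) * (Iic (2⁻¹ ^ n)).indicator 1 e := by
  rcases le_total 1 e with one_le | le_one
  · refine le_add_right ?_
    rw [ENNReal.rpow_neg, ENNReal.inv_le_one]
    exact ENNReal.one_le_rpow one_le hs
  rcases eq_or_ne e 0 with rfl | e_ne_zero
  · suffices ∑' n : ℕ, (2 ^ s : ℝ≥0∞) ^ (n + 1) = ∞ by simp [this]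
    refine top_unique <| (ENNReal.tsum_const_eq_top_of_ne_zero one_ne_zero).ge.trans <|
      ENNReal.tsum_le_tsum fun n => one_le_pow₀ (ENNReal.one_le_rpow one_le_two hs)
  obtain ⟨n, lt_e, e_le⟩ : ∃ n : ℕ, 2⁻¹ ^ (n + 1) < e ∧ e ≤ 2⁻¹ ^ n := by
    lift e to ℝ≥0 using ne_top_of_le_ne_top ENNReal.one_ne_top le_one
    obtain ⟨n, hn⟩ := exists_nat_pow_near_of_lt_one (pos_iff_ne_zero.2 (by simpa using e_ne_zero))
      (by simpa using le_one) (by simp : (0 : ℝ≥0) < 2⁻¹) (inv_lt_one_of_one_lt₀ one_lt_two)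
    refine ⟨n, ?_⟩
    rw [← ENNReal.coe_ofNat, ← ENNReal.coe_inv two_ne_zero]
    exact_mod_cast hn
  calc
    e ^ (-s) ≤ (2⁻¹ ^ (n + 1)) ^ (-s) := by
      simp only [ENNReal.rpow_neg]
      gcongr
    _ = (2 ^ s) ^ (n + 1) * (Iic (2⁻¹ ^ n)).indicator 1 e := by
      rw [indicator_of_mem (mem_Iic.2 e_le), Pi.one_apply, mul_one, ← ENNReal.inv_pow,
        ENNReal.rpow_neg, ENNReal.inv_rpow, inv_inv, ← ENNReal.rpow_natCast_mul, mul_comm,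
        ENNReal.rpow_mul_natCast]
    _ ≤ ∑' n : ℕ, (2 ^ s) ^ (n + 1) * (Iic (2⁻¹ ^ n)).indicator 1 e :=
      ENNReal.le_tsum (f := fun n : ℕ => (2 ^ s) ^ (n + 1) * (Iic (2⁻¹ ^ n)).indicator 1 e) n
    _ ≤ _ := le_add_self

theorem lintegral_edist_rpow_neg_le {X : Type*} [PseudoMetricSpace X] [MeasurableSpace X]
    [OpensMeasurableSpace X] {μ : Measure X} {s t : ℝ} (hs : 0 < s) {A : ℝ≥0} {x : X}
    (hA : ∀ r > 0, μ (closedBall x r) ≤ A * ENNReal.ofReal r ^ t) :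
    ∫⁻ y, edist x y ^ (-s) ∂μ ≤ μ univ + 2 ^ s * A * (1 - 2 ^ (s - t))⁻¹ := by
  set ball : ℕ → Set X := fun n => closedBall x (2⁻¹ ^ n)
  have measurable_indicator (n : ℕ) : Measurable ((ball n).indicator (1 : X → ℝ≥0∞)) :=
    measurable_one.indicator measurableSet_closedBall
  have ball_eq (n : ℕ) : ball n = edist x ⁻¹' Iic (2⁻¹ ^ n) := by
    ext y
    rw [mem_preimage, mem_Iic, ← ofReal_two_inv_pow, edist_dist,
      ENNReal.ofReal_le_ofReal_iff (by positivity), ← mem_closedBall']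
  have indicator_eq (n : ℕ) (y : X) :
      (Iic (2⁻¹ ^ n)).indicator (1 : ℝ≥0∞ → ℝ≥0∞) (edist x y) = (ball n).indicator 1 y := by
    rw [ball_eq, ← indicator_comp_right]
    rfl
  calc
    ∫⁻ y, edist x y ^ (-s) ∂μ
      ≤ ∫⁻ y, 1 + ∑' n : ℕ, (2 ^ s) ^ (n + 1) * (ball n).indicator 1 y ∂μ := by
        simp only [← indicator_eq]
        exact lintegral_mono fun y => rpow_neg_le_one_add_tsum_indicator _ hs
    _ = μ univ + ∑' n : ℕ, (2 ^ s) ^ (n + 1) * μ (ball n) := by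
        rw [lintegral_add_left measurable_const, lintegral_one,
          lintegral_tsum fun n => ((measurable_indicator n).const_mul _).aemeasurable]
        simp only [lintegral_const_mul _ (measurable_indicator _),
          lintegral_indicator_one measurableSet_closedBall, ball]
    _ ≤ μ univ + ∑' n : ℕ, (2 ^ s : ℝ≥0∞) ^ (n + 1) * (A * (2⁻¹ ^ n) ^ t) := by
        gcongr with n
        exact ofReal_two_inv_pow n ▸ hA (2⁻¹ ^ n) (by positivity)
    _ = μ univ + ∑' n : ℕ, (2 ^ s * A : ℝ≥0∞) * (2 ^ (s - t)) ^ n := by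
        congr! 3 with n
        rw [sub_eq_add_neg, ENNReal.rpow_add _ _ two_ne_zero ENNReal.ofNat_ne_top, ENNReal.rpow_neg,
          ← ENNReal.inv_rpow, ← ENNReal.rpow_natCast_mul, mul_comm (n : ℝ),
          ENNReal.rpow_mul_natCast]
        ring
    _ = μ univ + 2 ^ s * A * (1 - 2 ^ (s - t))⁻¹ := by
        rw [ENNReal.tsum_mul_left, ENNReal.tsum_geometric]

theorem IsFrostman.rieszEnergy_ne_top {X : Type*} [PseudoMetricSpace X] [MeasurableSpace X]
    [OpensMeasurableSpace X] {μ : Measure X} [IsFiniteMeasure μ] {s t : ℝ} (hμ : IsFrostman μ t)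
    (hs : 0 < s) (hst : s < t) : rieszEnergy s μ ≠ ∞ := by
  obtain ⟨A, hA⟩ := hμ
  set B : ℝ≥0∞ := μ univ + 2 ^ s * A * (1 - 2 ^ (s - t))⁻¹
  have ratio_lt_one : (2 : ℝ≥0∞) ^ (s - t) < 1 :=
    ENNReal.rpow_lt_one_of_one_lt_of_neg ENNReal.one_lt_two (sub_neg.2 hst)
  have B_ne_top : B ≠ ∞ :=
    ENNReal.add_ne_top.2 ⟨measure_ne_top μ _, ENNReal.mul_ne_top
      (ENNReal.mul_ne_top (ENNReal.rpow_ne_top_of_nonneg hs.le ENNReal.ofNat_ne_top)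
        ENNReal.coe_ne_top)
      (ENNReal.inv_ne_top.2 (tsub_pos_of_lt ratio_lt_one).ne')⟩
  refine ne_top_of_le_ne_top (ENNReal.mul_ne_top B_ne_top (measure_ne_top μ univ)) <| calc
    rieszEnergy s μ ≤ ∫⁻ _, B ∂μ := lintegral_mono fun x => lintegral_edist_rpow_neg_le hs (hA x)
    _ = B * μ univ := lintegral_const B

/-! ### Absolute continuity of projections -/

theorem absolutelyContinuous_of_ae_liminf_ne_top {X : Type*} [MetricSpace X]
    [SecondCountableTopology X] [HasBesicovitchCovering X] [MeasurableSpace X] [BorelSpace X]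
    {ρ μ : Measure X} [IsFiniteMeasure ρ] [IsLocallyFiniteMeasure μ] {r : ℕ → ℝ}
    (hr : Tendsto r atTop (𝓝[>] 0))
    (h : ∀ᵐ x ∂ρ, liminf (fun n => ρ (closedBall x (r n)) / μ (closedBall x (r n))) atTop ≠ ∞) :
    ρ ≪ μ := by
  intro Z hZ
  set T : ℕ → Set X := fun N =>
    {x | ∃ᶠ n in atTop, ρ (closedBall x (r n)) ≤ (N + 1 : ℝ≥0) * μ (closedBall x (r n))}
  have ρ_inter_le (N : ℕ) : ρ (Z ∩ T N) = 0 := by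
    refine nonpos_iff_eq_zero.1 <| calc
      ρ (Z ∩ T N) ≤ ((N + 1 : ℝ≥0) • μ) (Z ∩ T N) :=
        (Besicovitch.vitaliFamily ρ).measure_le_of_frequently_le _ .rfl _ fun x hx =>
          ((Besicovitch.tendsto_filterAt ρ x).comp hr).frequently hx.2
      _ ≤ ((N + 1 : ℝ≥0) • μ) Z := measure_mono inter_subset_left
      _ = 0 := by rw [Measure.smul_apply, hZ, smul_zero]
  have ae_mem : ∀ᵐ x ∂ρ, x ∈ ⋃ N, T N := by
    filter_upwards [h] with x hx
    obtain ⟨N, hN⟩ := ENNReal.exists_nat_gt hx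
    refine mem_iUnion.2
      ⟨N, (frequently_lt_of_liminf_lt (by isBoundedDefault) hN).mono fun n hn => ?_⟩
    refine (ENNReal.div_le_iff_le_mul (Or.inr ENNReal.coe_ne_top) (Or.inr ?_)).1 (hn.le.trans ?_)
    · exact ENNReal.coe_ne_zero.2 (by positivity)
    · exact_mod_cast N.le_succ
  refine nonpos_iff_eq_zero.1 <| calc
    ρ Z ≤ ρ ((⋃ N, Z ∩ T N) ∪ (⋃ N, T N)ᶜ) := by
      rw [← inter_iUnion]
      exact measure_mono fun x hx => or_iff_not_imp_right.2 fun h => ⟨hx, not_not.1 h⟩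
    _ ≤ ρ (⋃ N, Z ∩ T N) + ρ (⋃ N, T N)ᶜ := measure_union_le _ _
    _ = 0 := by rw [measure_iUnion_null ρ_inter_le, show ρ (⋃ N, T N)ᶜ = 0 from ae_mem, add_zero]

theorem measurable_measure_closedBall {X : Type*} [PseudoMetricSpace X]
    [SecondCountableTopology X] [MeasurableSpace X] [OpensMeasurableSpace X] (μ : Measure X)
    [SFinite μ] (r : ℝ) : Measurable fun x => μ (closedBall x r) :=
  measurable_measure_prodMk_left
    (measurableSet_le (measurable_snd.dist measurable_fst) measurable_const)

section Transversality

variable {Λ Ω E : Type*} [MeasurableSpace Λ] [MeasurableSpace Ω] [MeasurableSpace E]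

theorem measurable_map_closedBall [PseudoMetricSpace E] [SecondCountableTopology E]
    [OpensMeasurableSpace E] {θ : Measure Ω} [SFinite θ] {π : Λ → Ω → E}
    (hπ : Measurable (Function.uncurry π)) (r : ℝ) :
    Measurable fun z : Λ × Ω => θ.map (π z.1) (closedBall (π z.1 z.2) r) := by
  have near : MeasurableSet {z : (Λ × Ω) × Ω | dist (π z.1.1 z.2) (π z.1.1 z.1.2) ≤ r} :=
    measurableSet_le ((hπ.comp (measurable_fst.fst.prodMk measurable_snd)).dist
      (hπ.comp measurable_fst)) measurable_const
  simp only [Measure.map_apply hπ.of_uncurry_left measurableSet_closedBall]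
  exact measurable_measure_prodMk_left near

theorem lintegral_lintegral_map_closedBall [PseudoMetricSpace E] [SecondCountableTopology E]
    [OpensMeasurableSpace E] {ν : Measure Λ} [SFinite ν] {θ : Measure Ω} [SFinite θ]
    {π : Λ → Ω → E} (hπ : Measurable (Function.uncurry π)) (r : ℝ) :
    ∫⁻ l, ∫⁻ p, θ.map (π l) (closedBall (π l p) r) ∂θ ∂ν =
      ∫⁻ p, ∫⁻ p', ν {l | dist (π l p') (π l p) ≤ r} ∂θ ∂θ := by
  have near : MeasurableSet {z : (Ω × Ω) × Λ | dist (π z.2 z.1.2) (π z.2 z.1.1) ≤ r} :=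
    measurableSet_le ((hπ.comp (measurable_snd.prodMk measurable_fst.snd)).dist
      (hπ.comp (measurable_snd.prodMk measurable_fst.fst))) measurable_const
  have near_left (l : Λ) : MeasurableSet {z : Ω × Ω | dist (π l z.2) (π l z.1) ≤ r} :=
    measurable_prodMk_right near
  calc
    ∫⁻ l, ∫⁻ p, θ.map (π l) (closedBall (π l p) r) ∂θ ∂ν
      = ∫⁻ l, (θ.prod θ) {z | dist (π l z.2) (π l z.1) ≤ r} ∂ν := by
        simp only [Measure.prod_apply (near_left _),
          Measure.map_apply hπ.of_uncurry_left measurableSet_closedBall]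
        rfl
    _ = ((θ.prod θ).prod ν) {z | dist (π z.2 z.1.2) (π z.2 z.1.1) ≤ r} :=
        (Measure.prod_apply_symm near).symm
    _ = ∫⁻ p, ∫⁻ p', ν {l | dist (π l p') (π l p) ≤ r} ∂θ ∂θ := by
        rw [Measure.prod_apply near]
        exact lintegral_prod _ (measurable_measure_prodMk_left near).aemeasurable

variable [PseudoEMetricSpace Ω] [NormedAddCommGroup E] [NormedSpace ℝ E] [FiniteDimensional ℝ E]
  [BorelSpace E] {ν : Measure Λ} [SFinite ν] {θ : Measure Ω} {μ : Measure E} [μ.IsAddHaarMeasure]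
  {π : Λ → Ω → E} {C : ℝ≥0} {s : ℝ}

theorem lintegral_lintegral_map_closedBall_div_le [SFinite θ]
    (hπ : Measurable (Function.uncurry π)) {r : ℝ} (hr : 0 < r)
    (transversal : ∀ p p',
      ν {l | dist (π l p) (π l p') ≤ r} ≤ C * μ (closedBall 0 r) * edist p p' ^ (-s)) :
    ∫⁻ l, ∫⁻ p, θ.map (π l) (closedBall (π l p) r) / μ (closedBall 0 r) ∂θ ∂ν ≤
      C * rieszEnergy s θ := by
  have ball_ne_zero : μ (closedBall 0 r) ≠ 0 := (measure_closedBall_pos μ 0 hr).ne'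
  have ball_ne_top : μ (closedBall 0 r) ≠ ∞ := measure_closedBall_lt_top.ne
  calc
    ∫⁻ l, ∫⁻ p, θ.map (π l) (closedBall (π l p) r) / μ (closedBall 0 r) ∂θ ∂ν
      = (∫⁻ p, ∫⁻ p', ν {l | dist (π l p') (π l p) ≤ r} ∂θ ∂θ) / μ (closedBall 0 r) := by
        simp only [div_eq_mul_inv, lintegral_mul_const' _ _ (ENNReal.inv_ne_top.2 ball_ne_zero),
          lintegral_lintegral_map_closedBall hπ]
    _ ≤ (∫⁻ p, ∫⁻ p', C * μ (closedBall 0 r) * edist p p' ^ (-s) ∂θ ∂θ) / μ (closedBall 0 r) := by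
        gcongr with p p'
        simpa only [edist_comm p' p] using transversal p' p
    _ = C * rieszEnergy s θ := by
        simp only [rieszEnergy, lintegral_const_mul' _ _
          (ENNReal.mul_ne_top ENNReal.coe_ne_top ball_ne_top)]
        rw [mul_right_comm, ENNReal.mul_div_cancel_right ball_ne_zero ball_ne_top]

theorem ae_map_absolutelyContinuous_of_rieszEnergy_ne_top [IsFiniteMeasure θ]
    (hπ : Measurable (Function.uncurry π)) (hθ : rieszEnergy s θ ≠ ∞)
    (transversal : ∀ r > 0, ∀ p p',
      ν {l | dist (π l p) (π l p') ≤ r} ≤ C * μ (closedBall 0 r) * edist p p' ^ (-s)) :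
    ∀ᵐ l ∂ν, θ.map (π l) ≪ μ := by
  obtain ⟨r, -, r_pos, r_tendsto⟩ := exists_seq_strictAnti_tendsto (0 : ℝ)
  set density : ℕ → Λ → E → ℝ≥0∞ := fun n l x =>
    θ.map (π l) (closedBall x (r n)) / μ (closedBall 0 (r n))
  have measurable_density (n : ℕ) : Measurable fun z : Λ × Ω => density n z.1 (π z.1 z.2) :=
    (measurable_map_closedBall hπ _).div_const _
  have measurable_liminf :
      Measurable fun z : Λ × Ω => liminf (fun n => density n z.1 (π z.1 z.2)) atTop :=
    .liminf measurable_density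
  have integral_ne_top : ∫⁻ l, ∫⁻ p, liminf (fun n => density n l (π l p)) atTop ∂θ ∂ν ≠ ∞ := by
    refine ne_top_of_le_ne_top (ENNReal.mul_ne_top ENNReal.coe_ne_top hθ) <| calc
      ∫⁻ l, ∫⁻ p, liminf (fun n => density n l (π l p)) atTop ∂θ ∂ν
        ≤ ∫⁻ l, liminf (fun n => ∫⁻ p, density n l (π l p) ∂θ) atTop ∂ν :=
          lintegral_mono fun l =>
            lintegral_liminf_le fun n => (measurable_density n).comp measurable_prodMk_left
      _ ≤ liminf (fun n => ∫⁻ l, ∫⁻ p, density n l (π l p) ∂θ ∂ν) atTop :=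
          lintegral_liminf_le fun n => (measurable_density n).lintegral_prod_right'
      _ ≤ C * rieszEnergy s θ :=
          liminf_le_of_le (by isBoundedDefault) fun b hb => hb.exists.elim fun n hn =>
            hn.trans (lintegral_lintegral_map_closedBall_div_le hπ (r_pos n)
              (transversal _ (r_pos n)))
  filter_upwards [ae_lt_top measurable_liminf.lintegral_prod_right' integral_ne_top] with l hl
  have ae_liminf_ne_top : ∀ᵐ x ∂θ.map (π l), liminf (fun n => density n l x) atTop ≠ ∞ := by
    rw [ae_map_iff hπ.of_uncurry_left.aemeasurable]
    · exact (ae_lt_top (measurable_liminf.comp measurable_prodMk_left) hl.ne).mono fun p => LT.lt.ne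
    · exact Measurable.liminf (fun n => (measurable_measure_closedBall _ _).div_const _)
        (measurableSet_singleton ∞).compl
  refine absolutelyContinuous_of_ae_liminf_ne_top
    (tendsto_nhdsWithin_iff.2 ⟨r_tendsto, .of_forall r_pos⟩) ?_
  simpa only [μ.addHaar_closedBall_center] using ae_liminf_ne_top

end Transversality

theorem volume_abs_sub_mul_le_inter_Icc_le {R r a b : ℝ} (hR : 0 ≤ R) (hr : 0 < r)
    (hab : 0 < max |a| |b|) :
    volume ({l | |a - l * b| ≤ r} ∩ Icc (-R) R) ≤
      ENNReal.ofReal (4 * (R + 1) * r / max |a| |b|) := by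
  rcases le_total (max |a| |b|) (2 * r) with large_r | small_r
  · calc
      volume ({l | |a - l * b| ≤ r} ∩ Icc (-R) R) ≤ volume (Icc (-R) R) :=
        measure_mono inter_subset_right
      _ = ENNReal.ofReal (R - -R) := Real.volume_Icc
      _ ≤ ENNReal.ofReal (4 * (R + 1) * r / max |a| |b|) := by
        refine ENNReal.ofReal_le_ofReal ((le_div_iff₀ hab).2 ?_)
        nlinarith
  rcases ({l | |a - l * b| ≤ r} ∩ Icc (-R) R).eq_empty_or_nonempty with empty | ⟨l, hl, hlR⟩
  · simp only [empty, measure_empty, zero_le]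
  have max_le : max |a| |b| ≤ 2 * (R + 1) * |b| := by
    have abs_a_le : |a| ≤ r + R * |b| := calc
      |a| ≤ |a - l * b| + |l * b| := by simpa using abs_add_le (a - l * b) (l * b)
      _ ≤ r + R * |b| := by
        rw [abs_mul]
        gcongr
        exacts [hl, abs_le.2 hlR]
    rcases max_cases |a| |b| with ⟨h, -⟩ | ⟨h, -⟩ <;> nlinarith [abs_nonneg b]
  have b_pos : 0 < |b| := pos_of_mul_pos_right (hab.trans_le max_le) (by positivity)
  calc
    volume ({l | |a - l * b| ≤ r} ∩ Icc (-R) R) ≤ volume (closedBall (a / b) (r / |b|)) := by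
      refine measure_mono fun l hl => ?_
      rw [mem_closedBall, dist_comm, Real.dist_eq, le_div_iff₀ b_pos, ← abs_mul, sub_mul,
        div_mul_cancel₀ _ (abs_pos.1 b_pos)]
      exact hl.1
    _ = ENNReal.ofReal (2 * (r / |b|)) := Real.volume_closedBall _ _
    _ ≤ ENNReal.ofReal (4 * (R + 1) * r / max |a| |b|) := by
      refine ENNReal.ofReal_le_ofReal ?_
      rw [← mul_div_assoc, div_le_div_iff₀ b_pos hab]
      nlinarith

theorem volume_restrict_Icc_dist_sub_mul_le (R : ℝ≥0) {r : ℝ} (hr : 0 < r) (p p' : ℝ × ℝ) :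
    volume.restrict (Icc (-R : ℝ) R) {l | dist (p.1 - l * p.2) (p'.1 - l * p'.2) ≤ r} ≤
      (2 * (R + 1) : ℝ≥0) * volume (closedBall (0 : ℝ) r) * edist p p' ^ (-1 : ℝ) := by
  rcases eq_or_ne p p' with rfl | hp
  · simp [hr, ENNReal.mul_top]
  have dist_pos : 0 < dist p p' := dist_pos.2 hp
  have sub_eq (l : ℝ) :
      p.1 - l * p.2 - (p'.1 - l * p'.2) = (p.1 - p'.1) - l * (p.2 - p'.2) := by
    ring
  simp only [Measure.restrict_apply' measurableSet_Icc, Real.dist_eq, sub_eq]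
  refine (volume_abs_sub_mul_le_inter_Icc_le R.coe_nonneg hr dist_pos).trans_eq ?_
  rw [Real.volume_closedBall, ENNReal.rpow_neg_one, edist_dist,
    ← ENNReal.ofReal_inv_of_pos dist_pos,
    ← ENNReal.ofReal_coe_nnreal, ← ENNReal.ofReal_mul (by positivity),
    ← ENNReal.ofReal_mul (by positivity), Prod.dist_eq, Real.dist_eq, Real.dist_eq]
  congr 1
  push_cast
  ring

theorem ae_map_sub_mul_absolutelyContinuous {θ : Measure (ℝ × ℝ)} [IsFiniteMeasure θ]
    (hθ : rieszEnergy 1 θ ≠ ∞) : ∀ᵐ l : ℝ, θ.map (fun p => p.1 - l * p.2) ≪ volume := by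
  have measurable_proj :
      Measurable (Function.uncurry fun (l : ℝ) (p : ℝ × ℝ) => p.1 - l * p.2) := by
    fun_prop
  have ae_restrict (R : ℕ) : ∀ᵐ l ∂volume.restrict (Icc (-R : ℝ) R),
      θ.map (fun p => p.1 - l * p.2) ≪ volume :=
    ae_map_absolutelyContinuous_of_rieszEnergy_ne_top measurable_proj hθ
      fun r hr => volume_restrict_Icc_dist_sub_mul_le R hr
  have iUnion_Icc : ⋃ R : ℕ, Icc (-R : ℝ) R = univ :=
    iUnion_eq_univ_iff.2 fun l => (exists_nat_ge |l|).imp fun R => abs_le.1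
  simpa only [iUnion_Icc, Measure.restrict_univ] using
    (ae_restrict_iUnion_iff (fun R : ℕ => Icc (-R : ℝ) R) _).2 ae_restrict

theorem dimH_real_le_one (K : Set ℝ) : dimH K ≤ 1 := Real.dimH_univ ▸ dimH_mono (subset_univ K)

theorem exists_pos_exponents {d₁ d₂ : ℝ≥0∞} (h₁ : d₁ ≤ 1) (h₂ : d₂ ≤ 1) (h : 1 < d₁ + d₂) :
    ∃ s t : ℝ, 0 < s ∧ 0 < t ∧ 1 < s + t ∧ ENNReal.ofReal s < d₁ ∧ ENNReal.ofReal t < d₂ := by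
  have d₁_ne_zero : d₁ ≠ 0 := fun h0 => h.not_ge (by simpa [h0] using h₂)
  have d₂_ne_zero : d₂ ≠ 0 := fun h0 => h.not_ge (by simpa [h0] using h₁)
  obtain ⟨s, hs, t, ht, hst⟩ := ENNReal.exists_lt_add_of_lt_add h d₁_ne_zero d₂_ne_zero
  lift s to ℝ≥0 using hs.ne_top
  lift t to ℝ≥0 using ht.ne_top
  have s_lt_one : s < 1 := by exact_mod_cast hs.trans_le h₁
  have t_lt_one : t < 1 := by exact_mod_cast ht.trans_le h₂
  have one_lt : (1 : ℝ) < s + t := by exact_mod_cast hst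
  refine ⟨s, t, ?_, ?_, one_lt, by rwa [ENNReal.ofReal_coe_nnreal],
    by rwa [ENNReal.ofReal_coe_nnreal]⟩
  · linarith [NNReal.coe_lt_coe.2 t_lt_one, NNReal.coe_one]
  · linarith [NNReal.coe_lt_coe.2 s_lt_one, NNReal.coe_one]

theorem stmt_3_general (K₁ K₂ : Set ℝ) (h₁ : AnalyticSet K₁) (h₂ : AnalyticSet K₂)
    (hd : 1 < dimH K₁ + dimH K₂) :
    ∀ᵐ l : ℝ, 0 < volume (Set.image2 (fun x y => x - l * y) K₁ K₂) := by
  obtain ⟨s, t, hs, ht, hst, hsK₁, htK₂⟩ :=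
    exists_pos_exponents (dimH_real_le_one K₁) (dimH_real_le_one K₂) hd
  obtain ⟨μ, _, frostman_μ, hμ⟩ := exists_isFrostman_of_lt_dimH h₁ hs hsK₁
  obtain ⟨ν, _, frostman_ν, hν⟩ := exists_isFrostman_of_lt_dimH h₂ ht htK₂
  have energy_ne_top : rieszEnergy 1 (μ.prod ν) ≠ ∞ :=
    (frostman_μ.prod frostman_ν hs.le ht.le).rieszEnergy_ne_top one_pos hst
  have ae_mem : ∀ᵐ p ∂μ.prod ν, p ∈ K₁ ×ˢ K₂ :=
    (Measure.quasiMeasurePreserving_fst.ae hμ).and (Measure.quasiMeasurePreserving_snd.ae hν)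
  filter_upwards [ae_map_sub_mul_absolutelyContinuous energy_ne_top] with l hl
  refine pos_iff_ne_zero.2 fun image_null => ?_
  have ae_notMem := ae_of_ae_map (by fun_prop) (measure_eq_zero_iff_ae_notMem.1 (hl image_null))
  obtain ⟨p, hp, hp_notMem⟩ := (ae_mem.and ae_notMem).exists
  exact hp_notMem (mem_image2_of_mem hp.1 hp.2)

theorem stmt_3 (K₁ K₂ : Set ℝ) (h₁ : MeasurableSet K₁) (h₂ : MeasurableSet K₂)
    (hd : 1 < dimH K₁ + dimH K₂) :
    ∀ᵐ l : ℝ, 0 < volume (Set.image2 (fun x y => x - l * y) K₁ K₂) :=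
  stmt_3_general K₁ K₂ h₁.analyticSet h₂.analyticSet hd
end
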